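/- Let G be a connected signed eulerian graph. Then the flow number Φ(G) equals 3 if and only if G is triply odd. -/

import Mathlib

open Finset

/-- A signed multigraph on vertex type `V` with edge type `E`: each edge `e`
consists of two half-edges indexed by `Bool`; `ends e i` is the end-vertex at
which the half-edge `(e, i)` is attached (loops and multiple edges are
allowed), and `sign e ∈ {1, -1}` is the sign of the edge `e`. -/
structure SignedGraph (V E : Type) where
  ends : E → Bool → V
  sign : E → ℤˣ

namespace SignedGraph

variable {V E : Type} [Fintype V] [Fintype E] [DecidableEq V] [DecidableEq E]

/-- The valency of `v` in the subgraph spanned by the edge set `S`: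
the number of half-edges of edges of `S` attached at `v` (a loop at `v`
contributes `2`). -/
def valencyOn (G : SignedGraph V E) (S : Finset E) (v : V) : ℕ :=
  (univ.filter fun p : E × Bool => p.1 ∈ S ∧ G.ends p.1 p.2 = v).card

/-- The valency of a vertex in `G`. -/
def valency (G : SignedGraph V E) (v : V) : ℕ :=
  G.valencyOn univ v

/-- The set of vertices incident with some edge of `S`. -/
def suppV (G : SignedGraph V E) (S : Finset E) : Finset V :=
  univ.filter fun v => ∃ e ∈ S, ∃ i : Bool, G.ends e i = v

/-- `u` and `v` are joined by an edge of `S`. -/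
def AdjOn (G : SignedGraph V E) (S : Finset E) (u v : V) : Prop :=
  ∃ e ∈ S, ∃ i : Bool, G.ends e i = u ∧ G.ends e (!i) = v

/-- The subgraph spanned by the edge set `S` is connected: any two vertices
incident with edges of `S` are joined by a walk using edges of `S`. -/
def ConnOn (G : SignedGraph V E) (S : Finset E) : Prop :=
  ∀ u ∈ G.suppV S, ∀ v ∈ G.suppV S, Relation.ReflTransGen (G.AdjOn S) u v

/-- `G` is connected (as a graph on the whole vertex set `V`). -/
def Connected (G : SignedGraph V E) : Prop :=
  Nonempty V ∧ ∀ u v : V, Relation.ReflTransGen (G.AdjOn univ) u v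

/-- The edge set `S` spans a circuit: a nonempty connected `2`-regular
subgraph. -/
def IsCircuit (G : SignedGraph V E) (S : Finset E) : Prop :=
  S.Nonempty ∧ G.ConnOn S ∧ ∀ v ∈ G.suppV S, G.valencyOn S v = 2

/-- The sign of a set of edges: the product of the signs of its edges. -/
def signOf (G : SignedGraph V E) (S : Finset E) : ℤˣ :=
  ∏ e ∈ S, G.sign e

/-- The negative edges among `S`. -/
def negEdges (G : SignedGraph V E) (S : Finset E) : Finset E :=
  S.filter fun e => G.sign e = -1

/-- A balanced circuit: a circuit of sign `+1`. -/
def IsBalancedCircuit (G : SignedGraph V E) (S : Finset E) : Prop :=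
  G.IsCircuit S ∧ G.signOf S = 1

/-- An unbalanced circuit: a circuit of sign `-1`. -/
def IsUnbalancedCircuit (G : SignedGraph V E) (S : Finset E) : Prop :=
  G.IsCircuit S ∧ G.signOf S = -1

/-- `G` is balanced: it contains no unbalanced circuit. -/
def Balanced (G : SignedGraph V E) : Prop :=
  ∀ S : Finset E, G.IsCircuit S → G.signOf S = 1

/-- `G` is tightly unbalanced: it is unbalanced, but for some edge `f` the
graph `G - f` is balanced. -/
def TightlyUnbalanced (G : SignedGraph V E) : Prop :=
  ¬ G.Balanced ∧ ∃ f : E, ∀ S : Finset E, G.IsCircuit S → f ∉ S → G.signOf S = 1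

/-- `G` is eulerian: connected with all valencies even. -/
def Eulerian (G : SignedGraph V E) : Prop :=
  G.Connected ∧ ∀ v : V, Even (G.valency v)

/-- The edge set `S` spans an eulerian subgraph of `G`. -/
def EulerianOn (G : SignedGraph V E) (S : Finset E) : Prop :=
  S.Nonempty ∧ G.ConnOn S ∧ ∀ v : V, Even (G.valencyOn S v)

/-- An orientation (bidirection) of `G`: `dir e i = true` means that the
half-edge `(e, i)` is directed towards its end-vertex, `dir e i = false` that
it is directed away from it.  Compatibility: a positive edge becomes an
ordinary directed edge (one half-edge in, one out) and a negative edge becomes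
a broken (extroverted or introverted) edge. -/
structure Orientation (G : SignedGraph V E) where
  dir : E → Bool → Bool
  compat : ∀ e : E, G.sign e = 1 ↔ dir e false ≠ dir e true

/-- `φ` is a flow on `G` with respect to the orientation `O`: at every vertex
`v`, the sum of values on half-edges directed into `v` equals the sum of
values on half-edges directed out of `v` (Kirchhoff's law). -/
def IsFlow {A : Type} [AddCommGroup A] (G : SignedGraph V E)
    (O : G.Orientation) (φ : E → A) : Prop :=
  ∀ v : V,
    ∑ p ∈ univ.filter (fun p : E × Bool => G.ends p.1 p.2 = v),
      (if O.dir p.1 p.2 then φ p.1 else -φ p.1) = 0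

/-- `G` admits a nowhere-zero `A`-flow. -/
def HasNZFlow (G : SignedGraph V E) (A : Type) [AddCommGroup A] : Prop :=
  ∃ (O : G.Orientation) (φ : E → A), G.IsFlow O φ ∧ ∀ e : E, φ e ≠ 0

/-- `G` is flow-admissible: it admits a nowhere-zero integer flow. -/
def FlowAdmissible (G : SignedGraph V E) : Prop :=
  ∃ (O : G.Orientation) (φ : E → ℤ), G.IsFlow O φ ∧ ∀ e : E, φ e ≠ 0

/-- `G` admits a nowhere-zero `k`-flow: an integer flow with all values in
`{±1, …, ±(k-1)}`. -/
def HasNZkFlow (G : SignedGraph V E) (k : ℕ) : Prop :=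
  ∃ (O : G.Orientation) (φ : E → ℤ), G.IsFlow O φ ∧
    ∀ e : E, φ e ≠ 0 ∧ |φ e| < (k : ℤ)

/-- `G` is triply odd: it can be decomposed into three edge-disjoint eulerian
subgraphs, each with an odd number of negative edges, sharing a common
vertex. -/
def TriplyOdd (G : SignedGraph V E) : Prop :=
  ∃ S₁ S₂ S₃ : Finset E,
    Disjoint S₁ S₂ ∧ Disjoint S₁ S₃ ∧ Disjoint S₂ S₃ ∧
    S₁ ∪ S₂ ∪ S₃ = univ ∧
    G.EulerianOn S₁ ∧ G.EulerianOn S₂ ∧ G.EulerianOn S₃ ∧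
    Odd (G.negEdges S₁).card ∧ Odd (G.negEdges S₂).card ∧
    Odd (G.negEdges S₃).card ∧
    ∃ v : V, v ∈ G.suppV S₁ ∧ v ∈ G.suppV S₂ ∧ v ∈ G.suppV S₃

/-- The edge set `P` spans a (nontrivial) path from `u` to `v`: a connected
subgraph in which `u` and `v` have valency `1` and all other vertices have
valency `2`. -/
def IsPathOn (G : SignedGraph V E) (P : Finset E) (u v : V) : Prop :=
  u ≠ v ∧ G.ConnOn P ∧ u ∈ G.suppV P ∧ v ∈ G.suppV P ∧
  G.valencyOn P u = 1 ∧ G.valencyOn P v = 1 ∧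
  ∀ w ∈ G.suppV P, w ≠ u → w ≠ v → G.valencyOn P w = 2

/-- `T` spans a signed circuit of type (2): the union of two unbalanced
circuits meeting at a single vertex. -/
def IsType2 (G : SignedGraph V E) (T : Finset E) : Prop :=
  ∃ (S₁ S₂ : Finset E) (v : V),
    G.IsUnbalancedCircuit S₁ ∧ G.IsUnbalancedCircuit S₂ ∧ Disjoint S₁ S₂ ∧
    G.suppV S₁ ∩ G.suppV S₂ = {v} ∧ S₁ ∪ S₂ = T

/-- `T` spans a signed circuit of type (3): the union of two vertex-disjoint
unbalanced circuits together with a path meeting the circuits only at its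
ends. -/
def IsType3 (G : SignedGraph V E) (T : Finset E) : Prop :=
  ∃ (S₁ S₂ P : Finset E) (u v : V),
    G.IsUnbalancedCircuit S₁ ∧ G.IsUnbalancedCircuit S₂ ∧
    Disjoint (G.suppV S₁) (G.suppV S₂) ∧
    G.IsPathOn P u v ∧ u ∈ G.suppV S₁ ∧ v ∈ G.suppV S₂ ∧
    G.suppV P ∩ G.suppV S₁ = {u} ∧ G.suppV P ∩ G.suppV S₂ = {v} ∧
    Disjoint P (S₁ ∪ S₂) ∧ S₁ ∪ S₂ ∪ P = T

/-- `T` spans a signed circuit: a balanced circuit, or a signed circuit of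
type (2) or (3). -/
def IsSignedCircuit (G : SignedGraph V E) (T : Finset E) : Prop :=
  G.IsBalancedCircuit T ∨ G.IsType2 T ∨ G.IsType3 T

/-- `T` spans a weak unbalanced bicircuit: two edge-disjoint unbalanced
circuits (not necessarily vertex-disjoint) joined by a possibly trivial path
having no edge in the two circuits. -/
def IsWeakBicircuit (G : SignedGraph V E) (T : Finset E) : Prop :=
  ∃ C₁ C₂ : Finset E,
    G.IsUnbalancedCircuit C₁ ∧ G.IsUnbalancedCircuit C₂ ∧ Disjoint C₁ C₂ ∧
    (((∃ v : V, v ∈ G.suppV C₁ ∧ v ∈ G.suppV C₂) ∧ T = C₁ ∪ C₂) ∨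
      ∃ (P : Finset E) (u v : V),
        G.IsPathOn P u v ∧ u ∈ G.suppV C₁ ∧ v ∈ G.suppV C₂ ∧
        Disjoint P (C₁ ∪ C₂) ∧ T = C₁ ∪ C₂ ∪ P)

/-- Every connected component of `G - f` contains an unbalanced circuit,
i.e. `G - f` has no balanced component. -/
def NoBalancedComponentAvoiding (G : SignedGraph V E) (f : E) : Prop :=
  ∀ u : V, ∃ S : Finset E,
    G.IsCircuit S ∧ G.signOf S = -1 ∧ f ∉ S ∧
    ∀ w ∈ G.suppV S, Relation.ReflTransGen (G.AdjOn (univ.erase f)) w u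

/-- `G` is 2-edge-connected: connected, and still connected after removing
any single edge. -/
def TwoEdgeConnected (G : SignedGraph V E) : Prop :=
  G.Connected ∧ ∀ f : E, ∀ u v : V,
    Relation.ReflTransGen (G.AdjOn (univ.erase f)) u v

/-- `G` is antibalanced: replacing its signature `σ` by `-σ` makes it
balanced. -/
def Antibalanced (G : SignedGraph V E) : Prop :=
  ∀ S : Finset E, G.IsCircuit S → (∏ e ∈ S, (-G.sign e)) = 1

end SignedGraph

/-!
Write a flow as the inflow `f` of its half-edges and let `t` be the sign of `f`. If `f` is a
nowhere-zero 3-flow, then `t' = 3 t - 2 f` arises from `t` by reversing edges, and the net inflow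
of `t'` is three times that of `t` at every vertex. Conversely, three odd eulerian subgraphs that
share a vertex, each oriented with net inflow 2 there and 0 elsewhere, combine with coefficients
1, 1, -2 to a 3-flow, while a 2-flow would force the number of negative edges to be even.

The tool is a max-flow min-cut argument for bidirected graphs. Consider trails from a vertex that
enter and leave every vertex by half-edges of opposite direction. The vertices that are reached
with only one direction of arrival carry a potential with values `±1`, whose cut weight is
controlled by the size of the edge cuts. Reversing trails therefore makes an eulerian graph balanced
at every vertex, or, if the number of negative edges is odd, at every vertex but one, which has net
inflow 2 and may be prescribed.

Suppose that there is no 2-edge cut and no orientation whose net inflow is 6 at some vertex and 0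
at all others. Then every vertex lies in a tight set, the support of a `±1` potential of cut weight
at most 8. The existence of `t'` makes the net inflow of `t` over a tight set divisible by 4, and
uncrossing partitions the vertices into tight sets, so that the number of negative edges is even.
As 2-edge cuts can be spliced away, an odd eulerian graph with a 3-flow has an orientation with net
inflow 6 at a single vertex. It decomposes into three connected pieces of net inflow 2 at that
vertex, and these are the three odd eulerian subgraphs.
-/

/-- A graph given by its darts (half-edges): `opp` exchanges the two darts of an edge and `vert`
is the vertex at which a dart is attached. -/
structure DartGraph (D V : Type*) where
  opp : D → D
  vert : D → V
  opp_opp : ∀ p, opp (opp p) = p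
  opp_ne : ∀ p, opp p ≠ p

namespace DartGraph

section Bidirections

variable {D V : Type*} {Γ : DartGraph D V} {t t' : D → ℤ}

theorem eq_opp_comm {p q : D} : p = Γ.opp q ↔ Γ.opp p = q :=
  ⟨fun h => by rw [h, Γ.opp_opp], fun h => by rw [← h, Γ.opp_opp]⟩

/-- A bidirection of a subgraph of `Γ`: `t p` is `1` or `-1` according as `p` points towards or
away from its vertex, and both darts of an edge outside the subgraph have value `0`. -/
def IsBidirection (Γ : DartGraph D V) (t : D → ℤ) : Prop :=
  ∀ p, |t p| ≤ 1 ∧ |t (Γ.opp p)| = |t p|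

/-- `t'` arises from the bidirection `t` by reversing some edges. -/
def Reorients (Γ : DartGraph D V) (t t' : D → ℤ) : Prop :=
  ∀ p, (t' p = t p ∧ t' (Γ.opp p) = t (Γ.opp p)) ∨ (t' p = -t p ∧ t' (Γ.opp p) = -t (Γ.opp p))

theorem IsBidirection.cases (ht : Γ.IsBidirection t) (p : D) : t p = 0 ∨ t p = 1 ∨ t p = -1 := by
  have := abs_le.1 (ht p).1
  omega

theorem IsBidirection.abs_eq_one (ht : Γ.IsBidirection t) {p : D} (hp : t p ≠ 0) : |t p| = 1 := by
  have := ht.cases p; grind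

theorem IsBidirection.opp_eq_zero_iff (ht : Γ.IsBidirection t) (p : D) :
    t (Γ.opp p) = 0 ↔ t p = 0 := by
  rw [← abs_eq_zero, (ht p).2, abs_eq_zero]

theorem IsBidirection.two_dvd_add_opp (ht : Γ.IsBidirection t) (p : D) :
    2 ∣ t p + t (Γ.opp p) := by
  have := ht.cases p; have := ht.cases (Γ.opp p); have := ht.opp_eq_zero_iff p
  omega

theorem IsBidirection.indicator (ht : Γ.IsBidirection t) {K : Set D}
    (hK : ∀ p ∈ K, Γ.opp p ∈ K) : Γ.IsBidirection (K.indicator t) := by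
  intro p
  by_cases hp : p ∈ K
  · simpa [hp, hK p hp] using ht p
  · have : Γ.opp p ∉ K := fun h => hp (by simpa only [Γ.opp_opp] using hK _ h)
    simp [hp, this]

theorem Reorients.refl (t : D → ℤ) : Γ.Reorients t t := fun _ => .inl ⟨rfl, rfl⟩

theorem Reorients.trans {t'' : D → ℤ} (h : Γ.Reorients t t') (h' : Γ.Reorients t' t'') :
    Γ.Reorients t t'' := by
  intro p
  rcases h p with ⟨h₁, h₂⟩ | ⟨h₁, h₂⟩ <;> rcases h' p with ⟨h₃, h₄⟩ | ⟨h₃, h₄⟩ <;>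
    simp [h₁, h₂, h₃, h₄]

theorem Reorients.neg (h : Γ.Reorients t t') : Γ.Reorients t (-t') :=
  h.trans fun _ => .inr ⟨rfl, rfl⟩

theorem Reorients.abs_eq (h : Γ.Reorients t t') (p : D) : |t' p| = |t p| := by
  rcases h p with ⟨h, -⟩ | ⟨h, -⟩ <;> simp [h]

theorem Reorients.ne_zero_iff (h : Γ.Reorients t t') (p : D) : t' p ≠ 0 ↔ t p ≠ 0 := by
  rw [← abs_ne_zero, h.abs_eq, abs_ne_zero]

theorem Reorients.isBidirection (h : Γ.Reorients t t') (ht : Γ.IsBidirection t) :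
    Γ.IsBidirection t' := fun p => by
  rw [h.abs_eq, h.abs_eq]; exact ht p

theorem reorients_sub_two_mul_indicator (t : D → ℤ) {K : Set D} (hK : ∀ p ∈ K, Γ.opp p ∈ K) :
    Γ.Reorients t (t - 2 * K.indicator t) := by
  intro p
  by_cases hp : p ∈ K
  · right
    simp only [Pi.sub_apply, Pi.mul_apply, Pi.ofNat_apply, Set.indicator_of_mem hp,
      Set.indicator_of_mem (hK p hp)]
    omega
  · have : Γ.opp p ∉ K := fun h => hp (by simpa only [Γ.opp_opp] using hK _ h)
    simp [hp, this]

variable [Fintype D]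

theorem sum_opp (Γ : DartGraph D V) (f : D → ℤ) : ∑ p, f (Γ.opp p) = ∑ p, f p :=
  Equiv.sum_comp (Function.Involutive.toPerm Γ.opp Γ.opp_opp) f

theorem two_mul_dvd_sum {d : ℤ} {f : D → ℤ} (hf : ∀ p, f (Γ.opp p) = f p) (hd : ∀ p, d ∣ f p) :
    2 * d ∣ ∑ p, f p := by
  choose k hk using hd
  rcases eq_or_ne d 0 with rfl | hd0
  · simp [hk]
  have hk_opp (p : D) : k (Γ.opp p) = k p :=
    mul_left_cancel₀ hd0 (by rw [← hk, ← hk, hf])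
  have hk_even : ((∑ p, k p : ℤ) : ZMod 2) = 0 := by
    rw [Int.cast_sum]
    refine Finset.sum_involution (fun p _ => Γ.opp p) (fun p _ => ?_) (fun p _ _ => Γ.opp_ne p)
      (fun _ _ => mem_univ _) fun p _ => Γ.opp_opp p
    rw [hk_opp]
    exact CharTwo.add_self_eq_zero _
  simp only [hk, ← Finset.mul_sum]
  rw [mul_comm]
  exact mul_dvd_mul_left d ((ZMod.intCast_zmod_eq_zero_iff_dvd _ 2).1 hk_even)

theorem Reorients.four_dvd_sum_sub (h : Γ.Reorients t t') (ht : Γ.IsBidirection t) :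
    4 ∣ ∑ p, t' p - ∑ p, t p := by
  have hsum : 2 * (∑ p, t' p - ∑ p, t p) =
      ∑ p, ((t' p - t p) + (t' (Γ.opp p) - t (Γ.opp p))) := by
    rw [Finset.sum_add_distrib, Γ.sum_opp fun p => t' p - t p, Finset.sum_sub_distrib]
    ring
  have hdvd : (2 * 4 : ℤ) ∣ ∑ p, ((t' p - t p) + (t' (Γ.opp p) - t (Γ.opp p))) := by
    refine two_mul_dvd_sum (fun p => by rw [Γ.opp_opp, add_comm]) fun p => ?_
    have := ht.two_dvd_add_opp p
    rcases h p with ⟨h₁, h₂⟩ | ⟨h₁, h₂⟩ <;> rw [h₁, h₂] <;> omega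
  omega

variable [DecidableEq V]

/-- The net inflow of `t` at the vertices. -/
def net (Γ : DartGraph D V) (t : D → ℤ) (v : V) : ℤ :=
  ∑ p with Γ.vert p = v, t p

theorem net_add (t t' : D → ℤ) : Γ.net (t + t') = Γ.net t + Γ.net t' := by
  ext v; simp [net, Finset.sum_add_distrib]

theorem net_neg (t : D → ℤ) : Γ.net (-t) = -Γ.net t := by
  ext v; simp [net]

theorem net_sub (t t' : D → ℤ) : Γ.net (t - t') = Γ.net t - Γ.net t' := by
  rw [sub_eq_add_neg, net_add, net_neg, sub_eq_add_neg]

theorem net_ofNat_mul (n : ℕ) [n.AtLeastTwo] (t : D → ℤ) :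
    Γ.net (ofNat(n) * t) = ofNat(n) * Γ.net t := by
  ext v; simp [net, Finset.mul_sum]

theorem net_single [DecidableEq D] (p : D) (x : ℤ) :
    Γ.net (Pi.single p x) = Pi.single (Γ.vert p) x := by
  ext v
  simp [net, Pi.single_apply, eq_comm]

theorem net_congr {v : V} (h : ∀ p, Γ.vert p = v → t p = t' p) : Γ.net t v = Γ.net t' v :=
  Finset.sum_congr rfl fun p hp => h p (mem_filter.1 hp).2

theorem net_eq_zero {v : V} (h : ∀ p, Γ.vert p = v → t p = 0) : Γ.net t v = 0 :=
  Finset.sum_eq_zero fun p hp => h p (mem_filter.1 hp).2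

theorem Reorients.two_dvd_net (h : Γ.Reorients t t') (heven : ∀ v, 2 ∣ Γ.net t v) (v : V) :
    2 ∣ Γ.net t' v := by
  have hdvd : 2 ∣ Γ.net t' v - Γ.net t v := by
    rw [net, net, ← Finset.sum_sub_distrib]
    refine Finset.dvd_sum fun p _ => ?_
    rcases h p with ⟨h, -⟩ | ⟨h, -⟩ <;> rw [h] <;> omega
  have := heven v
  omega

/-- The darts of the subgraph supporting `t` that are attached in `X` and whose opposite is
not. -/
def boundary (Γ : DartGraph D V) (t : D → ℤ) (X : Finset V) : Finset D :=
  {p | t p ≠ 0 ∧ Γ.vert p ∈ X ∧ Γ.vert (Γ.opp p) ∉ X}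

/-- The subgraph supporting `t` is connected, up to isolated vertices. -/
def IsConnected (Γ : DartGraph D V) (t : D → ℤ) : Prop :=
  ∀ X : Finset V, (∃ p, t p ≠ 0 ∧ Γ.vert p ∈ X) → (∃ p, t p ≠ 0 ∧ Γ.vert p ∉ X) →
    (Γ.boundary t X).Nonempty

/-- Every nonempty edge cut of the subgraph supporting `t` has at least `k` edges. -/
def MinCut (Γ : DartGraph D V) (t : D → ℤ) (k : ℕ) : Prop :=
  ∀ X : Finset V, (Γ.boundary t X).Nonempty → k ≤ #(Γ.boundary t X)

theorem mem_boundary {X : Finset V} {p : D} :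
    p ∈ Γ.boundary t X ↔ t p ≠ 0 ∧ Γ.vert p ∈ X ∧ Γ.vert (Γ.opp p) ∉ X := by
  simp [boundary]

theorem sum_mul_net [Fintype V] (c : V → ℤ) (t : D → ℤ) :
    ∑ v, c v * Γ.net t v = ∑ p, c (Γ.vert p) * t p := by
  simp only [net, Finset.mul_sum, Finset.sum_filter]
  rw [Finset.sum_comm]
  refine Finset.sum_congr rfl fun p _ => ?_
  simp

theorem sum_net [Fintype V] (t : D → ℤ) : ∑ v, Γ.net t v = ∑ p, t p := by
  simpa using Γ.sum_mul_net 1 t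

theorem sum_mem_net (X : Finset V) (t : D → ℤ) :
    ∑ v ∈ X, Γ.net t v = ∑ p, if Γ.vert p ∈ X then t p else 0 := by
  simp only [net, Finset.sum_filter]
  rw [Finset.sum_comm]
  simp only [Finset.sum_ite_eq]

end Bidirections

section Trails

variable {D V : Type*} {Γ : DartGraph D V} {t : D → ℤ} {x y z : V × ℤ} {l m : List D} {p : D}
  {F : Set D}

/-- The state in which a trail leaves along the dart `p`. A state consists of a vertex together
with the value of the dart by which the trail has arrived there; the trail has to leave along a
dart of opposite value. -/
def dep (Γ : DartGraph D V) (t : D → ℤ) (p : D) : V × ℤ := (Γ.vert p, -t p)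

/-- The state in which a trail arrives after traversing the edge of `p`, starting with `p`. -/
def arr (Γ : DartGraph D V) (t : D → ℤ) (p : D) : V × ℤ := (Γ.vert (Γ.opp p), t (Γ.opp p))

/-- The state obtained by exchanging the roles of arrival and departure. -/
def rev (x : V × ℤ) : V × ℤ := (x.1, -x.2)

/-- The set of all darts of the edges that occur in the list `l`. -/
def edges (Γ : DartGraph D V) (l : List D) : Set D := {p | p ∈ l ∨ Γ.opp p ∈ l}

/-- A directed trail of the bidirection `t` from the state `x` to the state `y`; the list contains
the darts along which its vertices are left, the latest one first. -/
inductive Trail (Γ : DartGraph D V) (t : D → ℤ) (x : V × ℤ) : List D → V × ℤ → Prop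
  | nil : Trail Γ t x [] x
  | cons {l : List D} {p : D} :
      Trail Γ t x l (Γ.dep t p) → p ∉ Γ.edges l → Trail Γ t x (p :: l) (Γ.arr t p)

/-- Some trail from `x` to `y` avoids all edges that have a dart in `F`. -/
def Reaches (Γ : DartGraph D V) (t : D → ℤ) (F : Set D) (x y : V × ℤ) : Prop :=
  ∃ l, Γ.Trail t x l y ∧ Disjoint (Γ.edges l) F

theorem rev_rev (x : V × ℤ) : rev (rev x) = x := by simp [rev]

theorem dep_opp (p : D) : Γ.dep t (Γ.opp p) = rev (Γ.arr t p) := rfl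

theorem arr_opp (p : D) : Γ.arr t (Γ.opp p) = rev (Γ.dep t p) := by
  simp [arr, rev, dep, Γ.opp_opp]

theorem opp_mem_edges : Γ.opp p ∈ Γ.edges l ↔ p ∈ Γ.edges l := by
  simp [edges, Γ.opp_opp, or_comm]

theorem edges_nil : Γ.edges [] = ∅ := by simp [edges]

theorem edges_append (l m : List D) : Γ.edges (l ++ m) = Γ.edges l ∪ Γ.edges m := by
  ext p
  simp only [edges, List.mem_append, Set.mem_ofPred_eq, Set.mem_union]
  tauto

theorem edges_cons (p : D) (l : List D) : Γ.edges (p :: l) = Γ.edges [p] ∪ Γ.edges l :=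
  edges_append [p] l

theorem edges_singleton (p : D) : Γ.edges [p] = {p, Γ.opp p} := by
  ext q
  simp [edges, ← eq_opp_comm]

theorem edges_map_opp_reverse (l : List D) : Γ.edges (l.reverse.map Γ.opp) = Γ.edges l := by
  have hmem (p : D) : p ∈ l.reverse.map Γ.opp ↔ Γ.opp p ∈ l := by
    simp [← eq_opp_comm]
  ext p
  simp only [edges, Set.mem_ofPred_eq, hmem, Γ.opp_opp, or_comm]

theorem disjoint_edges_singleton : Disjoint (Γ.edges l) (Γ.edges [p]) ↔ p ∉ Γ.edges l := by
  simp [edges_singleton, opp_mem_edges]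

theorem mem_edges_of_mem (h : p ∈ l) : p ∈ Γ.edges l := .inl h

theorem Trail.of_cons (h : Γ.Trail t x (p :: l) y) :
    Γ.Trail t x l (Γ.dep t p) ∧ p ∉ Γ.edges l ∧ y = Γ.arr t p := by
  cases h with | cons h hp => exact ⟨h, hp, rfl⟩

theorem Trail.append (hm : Γ.Trail t y m z) (hl : Γ.Trail t x l y)
    (hlm : Disjoint (Γ.edges m) (Γ.edges l)) : Γ.Trail t x (m ++ l) z := by
  induction hm with
  | nil => exact hl
  | @cons m p _ hp ih =>
    rw [edges_cons, Set.disjoint_union_left, disjoint_comm, disjoint_edges_singleton] at hlm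
    refine (ih hlm.2).cons ?_
    rw [edges_append]
    exact fun h => h.elim hp hlm.1

theorem Trail.split (h : Γ.Trail t x (m ++ p :: l) y) :
    Γ.Trail t x (p :: l) (Γ.arr t p) ∧ Γ.Trail t (Γ.arr t p) m y ∧
      Disjoint (Γ.edges m) (Γ.edges (p :: l)) := by
  induction m generalizing y with
  | nil => exact ⟨h.of_cons.2.2 ▸ h, h.of_cons.2.2 ▸ .nil, by simp [edges_nil]⟩
  | cons q m ih =>
    rw [List.cons_append] at h
    obtain ⟨hm, hq, rfl⟩ := h.of_cons
    obtain ⟨h₁, h₂, hdisj⟩ := ih hm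
    rw [edges_append, Set.mem_union, not_or] at hq
    rw [edges_cons q, Set.disjoint_union_left, disjoint_comm, disjoint_edges_singleton]
    exact ⟨h₁, h₂.cons hq.1, hq.2, hdisj⟩

theorem Trail.reverse (h : Γ.Trail t x l y) :
    Γ.Trail t (rev y) (l.reverse.map Γ.opp) (rev x) := by
  induction h with
  | nil => exact .nil
  | @cons l p _ hp ih =>
    rw [List.reverse_cons, List.map_append]
    refine ih.append ?_ ?_
    · rw [← arr_opp]
      exact Trail.cons .nil (by simp [edges_nil])
    · rwa [edges_map_opp_reverse, List.map_singleton, disjoint_edges_singleton, opp_mem_edges]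

theorem Trail.reaches_of_mem (h : Γ.Trail t x l y) (hF : Disjoint (Γ.edges l) F) (hp : p ∈ l) :
    Γ.Reaches t F x (Γ.dep t p) ∧ Γ.Reaches t F x (Γ.arr t p) := by
  obtain ⟨l₂, l₁, rfl⟩ := List.mem_iff_append.1 hp
  rw [edges_append, Set.disjoint_union_left] at hF
  refine ⟨⟨l₁, h.split.1.of_cons.1, ?_⟩, ⟨p :: l₁, h.split.1, hF.2⟩⟩
  exact (Set.disjoint_union_left.1 (edges_cons p l₁ ▸ hF.2)).2

-- Leave the first trail where it first meets an edge of the second one.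
theorem Trail.reaches_or_reaches_rev (hl : Γ.Trail t x l y) (hm : Γ.Trail t y m z)
    (hlF : Disjoint (Γ.edges l) F) (hmF : Disjoint (Γ.edges m) F) :
    Γ.Reaches t F x z ∨ Γ.Reaches t F x (rev y) := by
  suffices key : ∀ {k w}, Γ.Trail t x k w → Disjoint (Γ.edges k) F →
      Disjoint (Γ.edges m) (Γ.edges k) ∨ Γ.Reaches t F x z ∨ Γ.Reaches t F x (rev y) by
    refine (key hl hlF).elim (fun hml => .inl ⟨m ++ l, hm.append hl hml, ?_⟩) id
    exact edges_append m l ▸ hmF.union_left hlF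
  have leave {k n : List D} {q : D} {w : V × ℤ} (hk : Γ.Trail t x (q :: k) (Γ.arr t q))
      (hn : Γ.Trail t (Γ.arr t q) n w) (hkF : Disjoint (Γ.edges (q :: k)) F)
      (hnm : Γ.edges n ⊆ Γ.edges m) (hkm : Disjoint (Γ.edges m) (Γ.edges k))
      (hqn : q ∉ Γ.edges n) : Γ.Reaches t F x w := by
    refine ⟨n ++ q :: k, hn.append hk ?_, edges_append n _ ▸ (hmF.mono_left hnm).union_left hkF⟩
    rw [edges_cons, Set.disjoint_union_right, disjoint_edges_singleton]
    exact ⟨hqn, hkm.mono_left hnm⟩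
  intro k w hk hkF
  induction hk with
  | nil => simp [edges_nil]
  | @cons k q hk hqk ih =>
    refine (ih (hkF.mono_left (edges_cons q k ▸ Set.subset_union_right))).elim (fun hmk => ?_) .inr
    by_cases hqm : q ∈ m
    · obtain ⟨m₂, m₁, rfl⟩ := List.mem_iff_append.1 hqm
      refine .inr (.inl (leave (hk.cons hqk) hm.split.2.1 hkF ?_ hmk ?_))
      · simp [edges_append]
      · exact fun h => Set.disjoint_left.1 hm.split.2.2 h (mem_edges_of_mem List.mem_cons_self)
    by_cases hqm' : Γ.opp q ∈ m
    · obtain ⟨m₂, m₁, rfl⟩ := List.mem_iff_append.1 hqm'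
      obtain ⟨hm₁, hqm₁, -⟩ := hm.split.1.of_cons
      have hrev := hm₁.reverse
      rw [dep_opp, rev_rev] at hrev
      refine .inr (.inr (leave (hk.cons hqk) hrev hkF ?_ hmk ?_)) <;> rw [edges_map_opp_reverse]
      · rw [edges_append, edges_cons (Γ.opp q)]
        exact fun _ h => .inr (.inr h)
      · rwa [← opp_mem_edges]
    · left
      rw [edges_cons, Set.disjoint_union_right, disjoint_edges_singleton]
      exact ⟨fun h => h.elim hqm hqm', hmk⟩

theorem Reaches.arr_or (h : Γ.Reaches t F x (Γ.dep t p)) (hp : Disjoint (Γ.edges [p]) F) :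
    Γ.Reaches t F x (Γ.arr t p) ∨
      Γ.Reaches t F x (rev (Γ.arr t p)) ∧ Γ.Reaches t F x (rev (Γ.dep t p)) := by
  obtain ⟨l, hl, hlF⟩ := h
  by_cases hpl : p ∈ l
  · exact .inl (hl.reaches_of_mem hlF hpl).2
  by_cases hpl' : Γ.opp p ∈ l
  · exact .inr (arr_opp (t := t) p ▸ hl.reaches_of_mem hlF hpl')
  · exact .inl ⟨p :: l, hl.cons fun h => h.elim hpl hpl', edges_cons p l ▸ hp.union_left hlF⟩

end Trails

section Dominators

variable {D V : Type*} {Γ : DartGraph D V} {t : D → ℤ} {x y : V × ℤ} {l : List D} {p : D}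
  {F : Set D}

/-- Every trail from `x` to a state at the vertex `v` passes through the edge of `p`. -/
def Dominates (Γ : DartGraph D V) (t : D → ℤ) (x : V × ℤ) (p : D) (v : V) : Prop :=
  ∀ s, ¬ Γ.Reaches t {p} x (v, s)

theorem Reaches.rfl : Γ.Reaches t F x x := ⟨[], .nil, by simp [edges_nil]⟩

theorem Reaches.abs_snd (h : Γ.Reaches t F x y) (ht : Γ.IsBidirection t) : |y.2| = |x.2| := by
  obtain ⟨l, hl, -⟩ := h
  induction hl with
  | nil => rfl
  | @cons l p _ _ ih => rw [← ih, dep, abs_neg]; exact (ht p).2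

theorem Dominates.of_arr (ht : Γ.IsBidirection t) (hx : |x.2| = 1) (hp : t p ≠ 0) {q : D}
    (harr : ¬ Γ.Reaches t {q} x (Γ.arr t p)) (hrev : ¬ Γ.Reaches t {q} x (rev (Γ.arr t p))) :
    Γ.Dominates t x q (Γ.vert (Γ.opp p)) := by
  intro s hs
  have hs₁ : |s| = 1 := (hs.abs_snd ht).trans hx
  have ht₁ : |t (Γ.opp p)| = 1 := (ht p).2.trans (ht.abs_eq_one hp)
  rcases abs_eq_abs.1 (hs₁.trans ht₁.symm) with rfl | rfl
  · exact harr hs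
  · exact hrev hs

theorem Trail.opp_notMem_of_not_reaches (h : Γ.Trail t x l y)
    (hp : ¬ Γ.Reaches t ∅ x (rev (Γ.dep t p))) : Γ.opp p ∉ l :=
  fun hl => hp (arr_opp (t := t) p ▸ (h.reaches_of_mem (Set.disjoint_empty _) hl).2)

theorem not_reaches_rev_arr (hp : ¬ Γ.Reaches t ∅ x (rev (Γ.dep t p))) :
    ¬ Γ.Reaches t {p} x (rev (Γ.arr t p)) := by
  rintro ⟨l, hl, hpl⟩
  rw [Set.disjoint_singleton_right, ← opp_mem_edges] at hpl
  exact ((dep_opp (t := t) p ▸ hl).cons hpl).opp_notMem_of_not_reaches hp List.mem_cons_self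

-- A trail reaching `y` passes through `p` (lest the claim be trivial); continue with its final
-- segment, which starts with `p`.
theorem exists_trail_arr (hp : ¬ Γ.Reaches t ∅ x (rev (Γ.dep t p)))
    (hy : Γ.Reaches t ∅ x y) (hpy : ¬ Γ.Reaches t {p} x y) :
    ∃ m, Γ.Trail t (Γ.arr t p) m y ∧ Disjoint (Γ.edges m) {p} := by
  obtain ⟨l, hl, -⟩ := hy
  have hpl : p ∈ Γ.edges l := by
    by_contra h
    exact hpy ⟨l, hl, Set.disjoint_singleton_right.2 h⟩
  obtain ⟨m, k, rfl⟩ :=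
    List.mem_iff_append.1 (hpl.resolve_right (hl.opp_notMem_of_not_reaches hp))
  refine ⟨m, hl.split.2.1, hl.split.2.2.mono_right ?_⟩
  exact Set.singleton_subset_iff.2 (mem_edges_of_mem List.mem_cons_self)

theorem not_reaches_arr (hp : ¬ Γ.Reaches t ∅ x (rev (Γ.dep t p)))
    (hrev : Γ.Reaches t ∅ x (rev (Γ.arr t p))) :
    ¬ Γ.Reaches t {p} x (Γ.arr t p) := by
  rintro ⟨l, hl, hpl⟩
  obtain ⟨m, hm, hpm⟩ := exists_trail_arr hp hrev (not_reaches_rev_arr hp)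
  exact (hl.reaches_or_reaches_rev hm hpl hpm).elim (not_reaches_rev_arr hp)
    (not_reaches_rev_arr hp)

theorem Dominates.opp (hp : ¬ Γ.Reaches t ∅ x (rev (Γ.dep t p)))
    (ht : Γ.IsBidirection t) (hx : |x.2| = 1) {g : D} (hg : t g ≠ 0) (hpg : p ∉ Γ.edges [g])
    (hrev : Γ.Reaches t ∅ x (rev (Γ.arr t g))) (hdom : Γ.Dominates t x p (Γ.vert g)) :
    Γ.Dominates t x p (Γ.vert (Γ.opp g)) := by
  have hdep_opp : ¬ Γ.Reaches t {p} x (rev (Γ.arr t g)) := by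
    intro h
    have hdisj : Disjoint (Γ.edges [Γ.opp g]) {p} := by
      rwa [Set.disjoint_singleton_right, edges_singleton, Γ.opp_opp, Set.pair_comm,
        ← edges_singleton]
    rcases h.arr_or (p := Γ.opp g) hdisj with h | ⟨h, -⟩ <;> rw [arr_opp] at h
    exacts [hdom _ h, hdom _ h]
  refine .of_arr ht hx hg ?_ hdep_opp
  rintro ⟨l, hl, hpl⟩
  obtain ⟨m, hm, hpm⟩ := exists_trail_arr hp hrev hdep_opp
  refine (hl.reaches_or_reaches_rev (rev_rev (Γ.arr t g) ▸ hm.reverse) hpl ?_).elim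
    (not_reaches_rev_arr hp) hdep_opp
  rwa [edges_map_opp_reverse]

end Dominators

section Barrier

variable {D V : Type*} {Γ : DartGraph D V} {t : D → ℤ} {x : V × ℤ} {p : D} {v : V} {s : ℤ}

open Classical in
/-- `barrier Γ t x v` is `s = ±1` if `(v, s)` is the only state at `v` that can be reached from
`x`, and `0` if both or none of the states `(v, 1)` and `(v, -1)` can be reached. -/
noncomputable def barrier (Γ : DartGraph D V) (t : D → ℤ) (x : V × ℤ) (v : V) : ℤ :=
  (if Γ.Reaches t ∅ x (v, 1) then 1 else 0) - if Γ.Reaches t ∅ x (v, -1) then 1 else 0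

theorem abs_barrier_le_one : |Γ.barrier t x v| ≤ 1 := by
  rw [barrier]; grind

theorem barrier_mul_eq_one_iff (hs : |s| = 1) :
    Γ.barrier t x v * s = 1 ↔ Γ.Reaches t ∅ x (v, s) ∧ ¬ Γ.Reaches t ∅ x (v, -s) := by
  rw [barrier]
  rcases eq_or_eq_neg_of_abs_eq hs with rfl | rfl
  · grind
  · rw [neg_neg]; grind

theorem barrier_mul_eq_neg_one_iff (hs : |s| = 1) :
    Γ.barrier t x v * s = -1 ↔ Γ.Reaches t ∅ x (v, -s) ∧ ¬ Γ.Reaches t ∅ x (v, s) := by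
  have := barrier_mul_eq_one_iff (Γ := Γ) (t := t) (x := x) (v := v) (s := -s) (by rwa [abs_neg])
  rwa [neg_neg, mul_neg, neg_eq_iff_eq_neg] at this

theorem barrier_eq_zero_iff (hs : |s| = 1) :
    Γ.barrier t x v = 0 ↔ (Γ.Reaches t ∅ x (v, s) ↔ Γ.Reaches t ∅ x (v, -s)) := by
  rw [barrier]
  rcases eq_or_eq_neg_of_abs_eq hs with rfl | rfl
  · grind
  · rw [neg_neg]; grind

theorem barrier_mul_arr_eq_one (ht : Γ.IsBidirection t) (hp : Γ.barrier t x (Γ.vert p) * t p = -1)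
    (h0 : Γ.barrier t x (Γ.vert (Γ.opp p)) ≠ 0) :
    Γ.barrier t x (Γ.vert (Γ.opp p)) * t (Γ.opp p) = 1 := by
  have hp₁ : |t p| = 1 := ht.abs_eq_one (by rintro h; simp [h] at hp)
  rw [barrier_mul_eq_neg_one_iff hp₁] at hp
  have hopp : |t (Γ.opp p)| = 1 := (ht p).2.trans hp₁
  rw [Ne, barrier_eq_zero_iff hopp] at h0
  rw [barrier_mul_eq_one_iff hopp]
  have harr : Γ.Reaches t ∅ x (Γ.arr t p) := by
    refine (Reaches.arr_or hp.1 (Set.disjoint_empty _)).resolve_right fun h => hp.2 ?_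
    simpa only [rev, dep, neg_neg] using h.2
  rw [arr] at harr
  tauto

variable [Fintype D]

/-- The darts along which trails from `x` leave the barrier into the set of those vertices at which
both states can be reached. -/
noncomputable def doors (Γ : DartGraph D V) (t : D → ℤ) (x : V × ℤ) : Finset D :=
  {p | Γ.barrier t x (Γ.vert p) * t p = -1 ∧ Γ.barrier t x (Γ.vert (Γ.opp p)) = 0}

/-- Twice the total value of the edges of `t` after multiplying each dart by the potential `c` of
its vertex. -/
def cutWeight (Γ : DartGraph D V) (c : V → ℤ) (t : D → ℤ) : ℤ :=
  ∑ p, |c (Γ.vert p) * t p + c (Γ.vert (Γ.opp p)) * t (Γ.opp p)|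

theorem mem_doors :
    p ∈ Γ.doors t x ↔
      Γ.barrier t x (Γ.vert p) * t p = -1 ∧ Γ.barrier t x (Γ.vert (Γ.opp p)) = 0 := by
  simp [doors]

theorem abs_add_opp_barrier (ht : Γ.IsBidirection t) (p : D) :
    |Γ.barrier t x (Γ.vert p) * t p + Γ.barrier t x (Γ.vert (Γ.opp p)) * t (Γ.opp p)| =
      (Γ.barrier t x (Γ.vert p) * t p + 2 * (Γ.doors t x : Set D).indicator 1 p) +
        (Γ.barrier t x (Γ.vert (Γ.opp p)) * t (Γ.opp p) +
          2 * (Γ.doors t x : Set D).indicator 1 (Γ.opp p)) := by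
  have hmul (p : D) : |Γ.barrier t x (Γ.vert p) * t p| ≤ 1 := by
    rw [abs_mul]; exact mul_le_one₀ abs_barrier_le_one (abs_nonneg _) (ht p).1
  have h₁ := abs_le.1 (hmul p)
  have h₂ := abs_le.1 (hmul (Γ.opp p))
  have h₃ := barrier_mul_arr_eq_one (x := x) ht (p := p)
  have h₄ := barrier_mul_arr_eq_one (x := x) ht (p := Γ.opp p)
  classical
  simp only [Set.indicator_apply, mem_coe, mem_doors, Γ.opp_opp, Pi.one_apply] at h₃ h₄ ⊢
  generalize hb : Γ.barrier t x (Γ.vert p) * t p = b at *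
  generalize hb' : Γ.barrier t x (Γ.vert (Γ.opp p)) * t (Γ.opp p) = b' at *
  have hz : Γ.barrier t x (Γ.vert p) = 0 → b = 0 := fun h => by rw [← hb, h, zero_mul]
  have hz' : Γ.barrier t x (Γ.vert (Γ.opp p)) = 0 → b' = 0 := fun h => by rw [← hb', h, zero_mul]
  clear hb hb' hmul
  grind

theorem cutWeight_barrier [Fintype V] [DecidableEq V] (ht : Γ.IsBidirection t) :
    Γ.cutWeight (Γ.barrier t x) t =
      2 * ∑ v, Γ.barrier t x v * Γ.net t v + 4 * #(Γ.doors t x) := by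
  have hcard : ∑ p, (Γ.doors t x : Set D).indicator (1 : D → ℤ) p = #(Γ.doors t x) := by
    classical simp [Set.indicator_apply]
  rw [cutWeight, Finset.sum_congr rfl fun p _ => abs_add_opp_barrier ht p, Finset.sum_add_distrib,
    Γ.sum_opp fun p => Γ.barrier t x (Γ.vert p) * t p + 2 * (Γ.doors t x : Set D).indicator 1 p,
    sum_mul_net, Finset.sum_add_distrib, ← Finset.mul_sum, hcard]
  ring

end Barrier

section Regions

variable {D V : Type*} {Γ : DartGraph D V} {t : D → ℤ} {x : V × ℤ} {p q : D} {v : V} {s : ℤ}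

/-- Both states at the vertex `v` can be reached from `x`. -/
def BothReached (Γ : DartGraph D V) (t : D → ℤ) (x : V × ℤ) (v : V) : Prop :=
  ∀ s : ℤ, |s| = 1 → Γ.Reaches t ∅ x (v, s)

theorem BothReached.barrier_eq_zero (h : Γ.BothReached t x v) : Γ.barrier t x v = 0 :=
  (barrier_eq_zero_iff abs_one).2 ⟨fun _ => h _ (by simp), fun _ => h _ (by simp)⟩

theorem Reaches.bothReached (h : Γ.Reaches t ∅ x (v, s)) (hs : |s| = 1)
    (h0 : Γ.barrier t x v = 0) : Γ.BothReached t x v := by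
  intro s' hs'
  rcases abs_eq_abs.1 (hs'.trans hs.symm) with rfl | rfl
  · exact h
  · exact ((barrier_eq_zero_iff hs).1 h0).1 h

theorem BothReached.exists_reaches_opp (h : Γ.BothReached t x (Γ.vert p)) (ht : Γ.IsBidirection t)
    (hp : t p ≠ 0) : ∃ s, Γ.Reaches t ∅ x (Γ.vert (Γ.opp p), s) := by
  have hdep : Γ.Reaches t ∅ x (Γ.dep t p) := h _ (by rw [abs_neg, ht.abs_eq_one hp])
  exact (hdep.arr_or (Set.disjoint_empty _)).elim (⟨_, ·⟩) (⟨_, ·.1⟩)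

section

variable [Fintype V]

open Classical in
/-- The vertices at which some state can be reached from `x`. -/
noncomputable def reached (Γ : DartGraph D V) (t : D → ℤ) (x : V × ℤ) : Finset V :=
  {v | ∃ s, Γ.Reaches t ∅ x (v, s)}

/-- The vertices at which exactly one state can be reached from `x`. -/
noncomputable def barrierSupport (Γ : DartGraph D V) (t : D → ℤ) (x : V × ℤ) : Finset V :=
  {v | Γ.barrier t x v ≠ 0}

theorem mem_reached : v ∈ Γ.reached t x ↔ ∃ s, Γ.Reaches t ∅ x (v, s) := by simp [reached]

theorem mem_barrierSupport : v ∈ Γ.barrierSupport t x ↔ Γ.barrier t x v ≠ 0 := by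
  simp [barrierSupport]

end

variable [Fintype D]

theorem reaches_of_mem_doors (ht : Γ.IsBidirection t) (hp : p ∈ Γ.doors t x) :
    t p ≠ 0 ∧ ¬ Γ.Reaches t ∅ x (rev (Γ.dep t p)) ∧ Γ.Reaches t ∅ x (Γ.arr t p) ∧
      Γ.Reaches t ∅ x (rev (Γ.arr t p)) := by
  obtain ⟨hp, h0⟩ := mem_doors.1 hp
  have hp0 : t p ≠ 0 := fun h => by simp [h] at hp
  have hp₁ := ht.abs_eq_one hp0
  rw [barrier_mul_eq_neg_one_iff hp₁] at hp
  rw [barrier_eq_zero_iff ((ht p).2.trans hp₁)] at h0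
  have hrev : ¬ Γ.Reaches t ∅ x (rev (Γ.dep t p)) := by simpa only [rev, dep, neg_neg] using hp.2
  have harr : Γ.Reaches t ∅ x (Γ.arr t p) :=
    (Reaches.arr_or hp.1 (Set.disjoint_empty _)).resolve_right fun h => hrev h.2
  exact ⟨hp0, hrev, harr, h0.1 harr⟩

theorem dominates_of_mem_doors (ht : Γ.IsBidirection t) (hx : |x.2| = 1) (hp : p ∈ Γ.doors t x) :
    Γ.Dominates t x p (Γ.vert (Γ.opp p)) := by
  obtain ⟨hp0, hdep, -, hrev⟩ := reaches_of_mem_doors ht hp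
  exact .of_arr ht hx hp0 (not_reaches_arr hdep hrev) (not_reaches_rev_arr hdep)

-- A trail through one of the two doors would first have to pass through the other one.
theorem eq_of_dominates (ht : Γ.IsBidirection t) (hp : p ∈ Γ.doors t x) (hq : q ∈ Γ.doors t x)
    (hpq : Γ.Dominates t x p (Γ.vert (Γ.opp q))) (hqp : Γ.Dominates t x q (Γ.vert (Γ.opp p))) :
    p = q := by
  by_contra hne
  obtain ⟨-, hdep, ⟨l, hl, -⟩, -⟩ := reaches_of_mem_doors ht hp
  have hdep' := (reaches_of_mem_doors ht hq).2.1
  have through {g h : D} {k : List D} {y : V × ℤ} (hk : Γ.Trail t x k y)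
      (hh : ¬ Γ.Reaches t ∅ x (rev (Γ.dep t h)))
      (hhg : Γ.Dominates t x h (Γ.vert (Γ.opp g))) (hy : y = Γ.arr t g) : h ∈ k := by
    by_contra hhk
    refine hhg _ ⟨k, hy ▸ hk, Set.disjoint_singleton_right.2 fun h => ?_⟩
    exact h.elim hhk (hk.opp_notMem_of_not_reaches hh)
  have hnot {k : List D} {y : V × ℤ} (hk : Γ.Trail t x k y) : p ∉ k ∧ q ∉ k := by
    induction hk with
    | nil => simp
    | @cons k g hk hgk ih =>
      simp only [List.mem_cons, not_or]
      refine ⟨⟨?_, ih.1⟩, ?_, ih.2⟩ <;> rintro rfl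
      · exact ih.2 ((List.mem_cons.1 (through (hk.cons hgk) hdep' hqp rfl)).resolve_left
          (Ne.symm hne))
      · exact ih.1 ((List.mem_cons.1 (through (hk.cons hgk) hdep hpq rfl)).resolve_left hne)
  exact (hnot hl).2 (through hl hdep' hqp rfl)

theorem BothReached.dominates_opp {g : D} (hg : Γ.BothReached t x (Γ.vert g))
    (hgo : Γ.BothReached t x (Γ.vert (Γ.opp g))) (ht : Γ.IsBidirection t) (hx : |x.2| = 1)
    (hg0 : t g ≠ 0) (hp : p ∈ Γ.doors t x) (hdom : Γ.Dominates t x p (Γ.vert g)) :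
    Γ.Dominates t x p (Γ.vert (Γ.opp g)) := by
  have hbar : Γ.barrier t x (Γ.vert p) ≠ 0 := fun h => by simpa [h] using (mem_doors.1 hp).1
  refine hdom.opp (reaches_of_mem_doors ht hp).2.1 ht hx hg0 ?_ (hgo _ ?_)
  · rw [edges_singleton]
    rintro (rfl | rfl)
    exacts [hbar hg.barrier_eq_zero, hbar hgo.barrier_eq_zero]
  · exact (abs_neg _).trans ((ht g).2.trans (ht.abs_eq_one hg0))

variable [Fintype V]

open Classical in
/-- The vertices at which both states can be reached and whose dominating doors are those of the
vertex behind the door `p`. -/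
noncomputable def region (Γ : DartGraph D V) (t : D → ℤ) (x : V × ℤ) (p : D) : Finset V :=
  {v | Γ.BothReached t x v ∧
    ∀ q ∈ Γ.doors t x, Γ.Dominates t x q v ↔ Γ.Dominates t x q (Γ.vert (Γ.opp p))}

theorem mem_region :
    v ∈ Γ.region t x p ↔ Γ.BothReached t x v ∧
      ∀ q ∈ Γ.doors t x, Γ.Dominates t x q v ↔ Γ.Dominates t x q (Γ.vert (Γ.opp p)) := by
  simp [region]

theorem disjoint_region (ht : Γ.IsBidirection t) (hx : |x.2| = 1) (hp : p ∈ Γ.doors t x)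
    (hq : q ∈ Γ.doors t x) (hpq : p ≠ q) : Disjoint (Γ.region t x p) (Γ.region t x q) := by
  refine Finset.disjoint_left.2 fun v hvp hvq => hpq ?_
  have hvp := (mem_region.1 hvp).2
  have hvq := (mem_region.1 hvq).2
  exact eq_of_dominates ht hp hq
    ((hvq p hp).1 ((hvp p hp).2 (dominates_of_mem_doors ht hx hp)))
    ((hvp q hq).1 ((hvq q hq).2 (dominates_of_mem_doors ht hx hq)))

variable [DecidableEq V]

theorem vert_opp_mem_barrierSupport_of_mem_boundary_region (ht : Γ.IsBidirection t)
    (hx : |x.2| = 1) {g : D} (hg : g ∈ Γ.boundary t (Γ.region t x p)) :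
    Γ.vert (Γ.opp g) ∈ Γ.barrierSupport t x := by
  obtain ⟨hg0, hgp, hgo⟩ := mem_boundary.1 hg
  obtain ⟨hboth, hdom⟩ := mem_region.1 hgp
  refine mem_barrierSupport.2 fun h0 => hgo (mem_region.2 ?_)
  obtain ⟨s, hs⟩ := hboth.exists_reaches_opp ht hg0
  have hboth' : Γ.BothReached t x (Γ.vert (Γ.opp g)) :=
    hs.bothReached ((hs.abs_snd ht).trans hx) h0
  refine ⟨hboth', fun q hq => Iff.trans ⟨fun h => ?_, fun h => ?_⟩ (hdom q hq)⟩
  · rw [← Γ.opp_opp g] at hboth ⊢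
    exact hboth'.dominates_opp hboth ht hx (by rwa [Ne, ht.opp_eq_zero_iff]) hq h
  · exact hboth.dominates_opp hboth' ht hx hg0 hq h

theorem opp_mem_boundary_region (ht : Γ.IsBidirection t) (hx : |x.2| = 1)
    (hp : p ∈ Γ.doors t x) : Γ.opp p ∈ Γ.boundary t (Γ.region t x p) := by
  obtain ⟨hp0, -, harr, -⟩ := reaches_of_mem_doors ht hp
  obtain ⟨hp₁, h0⟩ := mem_doors.1 hp
  refine mem_boundary.2 ⟨by rwa [Ne, ht.opp_eq_zero_iff], mem_region.2 ⟨?_, fun _ _ => .rfl⟩, ?_⟩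
  · exact harr.bothReached ((harr.abs_snd ht).trans hx) h0
  · intro h
    rw [Γ.opp_opp, mem_region] at h
    simp [h.1.barrier_eq_zero] at hp₁

theorem boundary_reached_subset (ht : Γ.IsBidirection t) (hx : |x.2| = 1) :
    Γ.boundary t (Γ.reached t x) ⊆ Γ.boundary t (Γ.barrierSupport t x) := by
  intro p hp
  obtain ⟨hp0, hpr, hpo⟩ := mem_boundary.1 hp
  obtain ⟨s, hs⟩ := mem_reached.1 hpr
  rw [mem_reached] at hpo
  refine mem_boundary.2 ⟨hp0, mem_barrierSupport.2 fun h0 => hpo ?_, ?_⟩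
  · exact (hs.bothReached ((hs.abs_snd ht).trans hx) h0).exists_reaches_opp ht hp0
  · rw [mem_barrierSupport, not_not, barrier_eq_zero_iff abs_one]
    exact ⟨fun h => (hpo ⟨_, h⟩).elim, fun h => (hpo ⟨_, h⟩).elim⟩

theorem mul_card_doors_add_card_boundary_reached_le {k : ℕ} (ht : Γ.IsBidirection t)
    (hx : |x.2| = 1) (hk : Γ.MinCut t k) :
    k * #(Γ.doors t x) + #(Γ.boundary t (Γ.reached t x)) ≤
      #(Γ.boundary t (Γ.barrierSupport t x)) := by
  classical
  let inner (p : D) : Finset D := (Γ.boundary t (Γ.region t x p)).image Γ.opp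
  have hopp : Function.Injective Γ.opp := (show Function.Involutive Γ.opp from Γ.opp_opp).injective
  have hcard (p) (hp : p ∈ Γ.doors t x) : k ≤ #(inner p) := by
    rw [card_image_of_injective _ hopp]
    exact hk _ ⟨_, opp_mem_boundary_region ht hx hp⟩
  have hinner {g p : D} (hg : g ∈ inner p) : Γ.vert (Γ.opp g) ∈ Γ.region t x p := by
    obtain ⟨h, hh, rfl⟩ := mem_image.1 hg
    rw [Γ.opp_opp]
    exact (mem_boundary.1 hh).2.1
  have hdisj : Disjoint ((Γ.doors t x).biUnion inner) (Γ.boundary t (Γ.reached t x)) := by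
    refine Finset.disjoint_left.2 fun g hg hgr => (mem_boundary.1 hgr).2.2 ?_
    obtain ⟨p, -, hgp⟩ := mem_biUnion.1 hg
    exact mem_reached.2 ⟨1, (mem_region.1 (hinner hgp)).1 1 abs_one⟩
  have hsub : (Γ.doors t x).biUnion inner ∪ Γ.boundary t (Γ.reached t x) ⊆
      Γ.boundary t (Γ.barrierSupport t x) := by
    refine union_subset (biUnion_subset.2 fun p _ => image_subset_iff.2 fun g hg => ?_) ?_
    · obtain ⟨hg0, hgp, -⟩ := mem_boundary.1 hg
      refine mem_boundary.2 ⟨by rwa [Ne, ht.opp_eq_zero_iff],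
        vert_opp_mem_barrierSupport_of_mem_boundary_region ht hx hg, ?_⟩
      rw [Γ.opp_opp, mem_barrierSupport, not_not]
      exact (mem_region.1 hgp).1.barrier_eq_zero
    · exact boundary_reached_subset ht hx
  calc k * #(Γ.doors t x) + #(Γ.boundary t (Γ.reached t x))
      ≤ #((Γ.doors t x).biUnion inner) + #(Γ.boundary t (Γ.reached t x)) := by
        rw [card_biUnion]
        · rw [mul_comm]
          gcongr
          exact Finset.card_nsmul_le_sum _ _ _ hcard
        · exact fun p hp q hq hpq => Finset.disjoint_left.2 fun g hgp hgq =>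
            Finset.disjoint_left.1 (disjoint_region ht hx hp hq hpq) (hinner hgp) (hinner hgq)
    _ = #((Γ.doors t x).biUnion inner ∪ Γ.boundary t (Γ.reached t x)) :=
        (card_union_of_disjoint hdisj).symm
    _ ≤ _ := card_le_card hsub

end Regions

section Cuts

variable {D V : Type*} {Γ : DartGraph D V} {t t' : D → ℤ} {x : V × ℤ}
  [Fintype D] {c : V → ℤ}

section

variable [DecidableEq V] {X : Finset V}

theorem two_mul_card_boundary_le_cutWeight (hc : ∀ v, v ∈ X ↔ c v ≠ 0) :
    2 * (#(Γ.boundary t X) : ℤ) ≤ Γ.cutWeight c t := by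
  classical
  let ind : D → ℤ := fun p => if p ∈ Γ.boundary t X then 1 else 0
  have hcard : ∑ p, ind p = #(Γ.boundary t X) := by simp [ind]
  calc 2 * (#(Γ.boundary t X) : ℤ)
      = ∑ p, (ind p + ind (Γ.opp p)) := by
        rw [Finset.sum_add_distrib, Γ.sum_opp ind, hcard, two_mul]
    _ ≤ Γ.cutWeight c t := Finset.sum_le_sum fun p _ => ?_
  have hle {a b u w : ℤ} (ha : a ≠ 0) (hb : b = 0) (hu : u ≠ 0) : 1 ≤ |a * u + b * w| := by
    rw [hb, zero_mul, add_zero]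
    exact Int.one_le_abs (mul_ne_zero ha hu)
  simp only [ind, mem_boundary, Γ.opp_opp, hc, not_not]
  split_ifs with h h' h'
  · exact absurd h'.2.2 h.2.1
  · exact hle h.2.1 h.2.2 h.1
  · rw [add_comm (c _ * t p)]
    exact hle h'.2.1 h'.2.2 h'.1
  · exact abs_nonneg _

theorem two_dvd_sum_net_sub_card_boundary (ht : Γ.IsBidirection t) (X : Finset V) :
    2 ∣ ∑ v ∈ X, Γ.net t v - #(Γ.boundary t X) := by
  have hsplit : ∑ v ∈ X, Γ.net t v =
      (∑ p, if Γ.vert p ∈ X ∧ Γ.vert (Γ.opp p) ∈ X then t p else 0) +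
        ∑ p ∈ Γ.boundary t X, t p := by
    rw [sum_mem_net, boundary, Finset.sum_filter, ← Finset.sum_add_distrib]
    refine Finset.sum_congr rfl fun p _ => ?_
    grind
  have hinside : 2 ∣ ∑ p, if Γ.vert p ∈ X ∧ Γ.vert (Γ.opp p) ∈ X then t p else 0 := by
    have hsum := Γ.sum_opp fun p => if Γ.vert p ∈ X ∧ Γ.vert (Γ.opp p) ∈ X then t p else 0
    have hdvd : 2 * 2 ∣ ∑ p, ((if Γ.vert p ∈ X ∧ Γ.vert (Γ.opp p) ∈ X then t p else 0) +
        if Γ.vert (Γ.opp p) ∈ X ∧ Γ.vert (Γ.opp (Γ.opp p)) ∈ X then t (Γ.opp p) else 0) := by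
      refine two_mul_dvd_sum (Γ := Γ) (fun p => ?_) fun p => ?_
      · simp only [Γ.opp_opp, add_comm]
      · have := ht.two_dvd_add_opp p
        simp only [Γ.opp_opp, and_comm (a := Γ.vert (Γ.opp p) ∈ X)]
        split_ifs <;> simp [this]
    rw [Finset.sum_add_distrib, hsum] at hdvd
    omega
  have hbd : 2 ∣ ∑ p ∈ Γ.boundary t X, t p - #(Γ.boundary t X) := by
    rw [Finset.card_eq_sum_ones, Nat.cast_sum, ← Finset.sum_sub_distrib]
    refine Finset.dvd_sum fun p hp => ?_
    have := ht.cases p; have := (mem_boundary.1 hp).1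
    omega
  omega

theorem minCut_two_of_two_dvd_net (ht : Γ.IsBidirection t)
    (heven : ∀ v, 2 ∣ Γ.net t v) : Γ.MinCut t 2 := by
  intro X hX
  have := two_dvd_sum_net_sub_card_boundary ht X
  have := Finset.dvd_sum fun v (_ : v ∈ X) => heven v
  have := hX.card_pos
  omega

end

variable [Fintype V] [DecidableEq V]

theorem Reorients.two_mul_sum_mul_net_le_cutWeight (h : Γ.Reorients t t') (c : V → ℤ) :
    2 * ∑ v, c v * Γ.net t' v ≤ Γ.cutWeight c t := by
  rw [sum_mul_net, two_mul]
  nth_rw 2 [← Γ.sum_opp]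
  rw [← Finset.sum_add_distrib]
  refine Finset.sum_le_sum fun p _ => ?_
  rcases h p with ⟨h₁, h₂⟩ | ⟨h₁, h₂⟩ <;> rw [h₁, h₂]
  · exact le_abs_self _
  · rw [mul_neg, mul_neg, ← neg_add]
    exact neg_le_abs _

theorem card_boundary_reached_le_sum_barrier_mul_net (ht : Γ.IsBidirection t) (hx : |x.2| = 1)
    (hcut : Γ.MinCut t 2) :
    #(Γ.boundary t (Γ.reached t x)) ≤ ∑ v, Γ.barrier t x v * Γ.net t v := by
  have := cutWeight_barrier (x := x) ht
  have := two_mul_card_boundary_le_cutWeight (Γ := Γ) (t := t) fun v =>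
    mem_barrierSupport (Γ := Γ) (t := t) (x := x) (v := v)
  have := mul_card_doors_add_card_boundary_reached_le ht hx hcut
  omega

theorem cutWeight_barrier_le (ht : Γ.IsBidirection t) (hx : |x.2| = 1) (hcut : Γ.MinCut t 4) :
    Γ.cutWeight (Γ.barrier t x) t ≤ 4 * ∑ v, Γ.barrier t x v * Γ.net t v := by
  have := cutWeight_barrier (x := x) ht
  have := two_mul_card_boundary_le_cutWeight (Γ := Γ) (t := t) fun v =>
    mem_barrierSupport (Γ := Γ) (t := t) (x := x) (v := v)
  have := mul_card_doors_add_card_boundary_reached_le ht hx hcut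
  omega

end Cuts

section Balancing

variable {D V : Type*} {Γ : DartGraph D V} {t t' : D → ℤ} {x y : V × ℤ} {l : List D}
  {v w : V} {s : ℤ}

theorem reaches_of_barrier_ne_zero (h : Γ.barrier t x v ≠ 0) :
    Γ.Reaches t ∅ x (v, Γ.barrier t x v) := by
  have h₁ : |Γ.barrier t x v| = 1 :=
    le_antisymm abs_barrier_le_one (Int.one_le_abs h)
  refine ((barrier_mul_eq_one_iff h₁).1 ?_).1
  rw [← abs_mul_abs_self, h₁, one_mul]

variable [Fintype D] [DecidableEq V]

theorem net_indicator_edges_singleton (p : D) :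
    Γ.net ((Γ.edges [p]).indicator t) =
      Pi.single (Γ.vert p) (t p) + Pi.single (Γ.vert (Γ.opp p)) (t (Γ.opp p)) := by
  classical
  have : (Γ.edges [p]).indicator t = Pi.single p (t p) + Pi.single (Γ.opp p) (t (Γ.opp p)) := by
    have hne := Γ.opp_ne p
    ext q
    simp only [edges_singleton, Set.indicator_apply, Set.mem_insert_iff, Set.mem_singleton_iff,
      Pi.add_apply, Pi.single_apply]
    grind
  rw [this, net_add, net_single, net_single]

theorem Trail.net_indicator_edges (h : Γ.Trail t x l y) :
    Γ.net ((Γ.edges l).indicator t) = Pi.single y.1 y.2 - Pi.single x.1 x.2 := by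
  induction h with
  | nil => ext; simp [edges_nil, net]
  | @cons l p _ hp ih =>
    have hdisj := disjoint_edges_singleton.2 hp
    rw [edges_cons, Set.indicator_union_of_disjoint hdisj.symm]
    change Γ.net ((Γ.edges [p]).indicator t + (Γ.edges l).indicator t) = _
    rw [net_add, ih, net_indicator_edges_singleton, dep, arr]
    simp only [Pi.single_neg]
    abel

theorem Reaches.exists_reorients (h : Γ.Reaches t ∅ x y) :
    ∃ t', Γ.Reorients t t' ∧ Γ.net t' = Γ.net t - 2 * (Pi.single y.1 y.2 - Pi.single x.1 x.2) := by
  obtain ⟨l, hl, -⟩ := h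
  refine ⟨_, reorients_sub_two_mul_indicator (K := Γ.edges l) t fun _ => opp_mem_edges.2, ?_⟩
  rw [net_sub, net_ofNat_mul, hl.net_indicator_edges]

theorem Reorients.boundary_eq (h : Γ.Reorients t t') (X : Finset V) :
    Γ.boundary t' X = Γ.boundary t X := by
  simp only [boundary, h.ne_zero_iff]

theorem Reorients.isConnected (h : Γ.Reorients t t') (ht : Γ.IsConnected t) :
    Γ.IsConnected t' := fun X => by
  simpa only [h.ne_zero_iff, h.boundary_eq] using ht X

theorem exists_ne_zero_of_net_ne_zero (h : Γ.net t v ≠ 0) : ∃ p, t p ≠ 0 ∧ Γ.vert p = v := by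
  contrapose! h
  exact net_eq_zero fun p hp => by_contra fun h0 => h p h0 hp

variable [Finite V]

theorem exists_reaches_mul_net_pos (ht : Γ.IsBidirection t) (hcut : Γ.MinCut t 2) (hs : |s| = 1)
    (hv : 0 < s * Γ.net t v) : ∃ y, Γ.Reaches t ∅ (v, -s) y ∧ 0 < y.2 * Γ.net t y.1 := by
  have := Fintype.ofFinite V
  by_contra! h
  have hle (z : V) : Γ.barrier t (v, -s) z * Γ.net t z ≤ 0 := by
    rcases eq_or_ne (Γ.barrier t (v, -s) z) 0 with h0 | h0
    · simp [h0]
    · exact h _ (reaches_of_barrier_ne_zero h0)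
  have hlt : Γ.barrier t (v, -s) v * Γ.net t v < 0 := by
    have h₁ : Γ.barrier t (v, -s) v * s = -1 :=
      (barrier_mul_eq_neg_one_iff hs).2 ⟨.rfl, fun hr => (h _ hr).not_gt hv⟩
    rcases eq_or_eq_neg_of_abs_eq hs with rfl | rfl <;> nlinarith
  have hsum := Finset.sum_lt_sum (fun z _ => hle z) ⟨v, mem_univ v, hlt⟩
  have := card_boundary_reached_le_sum_barrier_mul_net (x := (v, -s)) ht (by rwa [abs_neg]) hcut
  rw [Finset.sum_const_zero] at hsum
  omega

theorem exists_reaches_of_mul_net_pos (ht : Γ.IsBidirection t) (hconn : Γ.IsConnected t)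
    (hcut : Γ.MinCut t 2) (hs : |s| = 1) (hv : 0 < s * Γ.net t v) (hvw : v ≠ w)
    (hw : ∃ p, t p ≠ 0 ∧ Γ.vert p = w) :
    ∃ y, Γ.Reaches t ∅ (v, -s) y ∧ y.1 ≠ v ∧ (y.1 = w ∨ 0 < y.2 * Γ.net t y.1) := by
  have := Fintype.ofFinite V
  by_contra! h
  have hle (z : V) : Γ.barrier t (v, -s) z * Γ.net t z ≤ 0 := by
    rcases eq_or_ne z v with rfl | hzv
    · have h₁ : Γ.barrier t (z, -s) z * s ≠ 1 := fun h =>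
        ((barrier_mul_eq_one_iff hs).1 h).2 .rfl
      have hbar := abs_le.1 (abs_barrier_le_one (Γ := Γ) (t := t) (x := (z, -s)) (v := z))
      rcases eq_or_eq_neg_of_abs_eq hs with rfl | rfl
      · exact mul_nonpos_of_nonpos_of_nonneg (by omega) (by omega)
      · exact mul_nonpos_of_nonneg_of_nonpos (by omega) (by omega)
    · rcases eq_or_ne (Γ.barrier t (v, -s) z) 0 with h0 | h0
      · simp [h0]
      · exact (h _ (reaches_of_barrier_ne_zero h0) hzv).2
  have hbd := card_boundary_reached_le_sum_barrier_mul_net (x := (v, -s)) ht (by rwa [abs_neg]) hcut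
  have hsum := Finset.sum_nonpos fun z (_ : z ∈ univ) => hle z
  obtain ⟨p, hp0, rfl⟩ := exists_ne_zero_of_net_ne_zero (right_ne_zero_of_mul hv.ne')
  obtain ⟨q, hq0, rfl⟩ := hw
  refine absurd (hconn (Γ.reached t (Γ.vert p, -s)) ⟨p, hp0, mem_reached.2 ⟨-s, .rfl⟩⟩
    ⟨q, hq0, fun hq => ?_⟩) ?_
  · obtain ⟨s', hs'⟩ := mem_reached.1 hq
    exact (h _ hs' hvw.symm).1 rfl
  · rw [← Finset.card_pos]
    omega

theorem exists_reorients_net_eq_zero_of_ne (ht : Γ.IsBidirection t) (hconn : Γ.IsConnected t)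
    (heven : ∀ v, 2 ∣ Γ.net t v) (hw : ∃ p, t p ≠ 0 ∧ Γ.vert p = w) :
    ∃ t', Γ.Reorients t t' ∧ ∀ v ≠ w, Γ.net t' v = 0 := by
  have := Fintype.ofFinite V
  let imbalance (τ : D → ℤ) : ℕ := ∑ v with v ≠ w, (Γ.net τ v).natAbs
  obtain ⟨τ, hτ, hmin⟩ :=
    (measure imbalance).wf.has_min {τ | Γ.Reorients t τ} ⟨t, .refl t⟩
  refine ⟨τ, hτ, fun v hvw => by_contra fun hv => ?_⟩
  have hτbi := hτ.isBidirection ht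
  have hτeven := hτ.two_dvd_net heven
  have hsign : |(Γ.net τ v).sign| = 1 := Int.abs_sign_of_ne_zero hv
  obtain ⟨y, hy, hyv, hyw⟩ := exists_reaches_of_mul_net_pos hτbi (hτ.isConnected hconn)
    (minCut_two_of_two_dvd_net hτbi hτeven) hsign (by simpa [Int.sign_mul_self_eq_abs] using hv) hvw
    (by simpa only [hτ.ne_zero_iff] using hw)
  have hy₁ : |y.2| = 1 := by rw [hy.abs_snd hτbi, abs_neg, hsign]
  obtain ⟨τ', hτ', hnet⟩ := hy.exists_reorients
  have hmove (z : V) {s : ℤ} (hs : |s| = 1) (hz : 0 < s * Γ.net τ z) :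
      (Γ.net τ z - 2 * s).natAbs < (Γ.net τ z).natAbs := by
    have := hτeven z
    rcases eq_or_eq_neg_of_abs_eq hs with rfl | rfl <;> omega
  refine hmin τ' (hτ.trans hτ') (show imbalance τ' < imbalance τ from ?_)
  refine Finset.sum_lt_sum (fun z hz => ?_) ⟨v, mem_filter.2 ⟨mem_univ v, hvw⟩, ?_⟩
  · have hzw : z ≠ w := by simpa using hz
    simp only [hnet, Pi.sub_apply, Pi.mul_apply, Pi.ofNat_apply, Pi.single_apply]
    have := hmove v hsign (by simpa [Int.sign_mul_self_eq_abs] using hv)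
    have := hmove y.1 hy₁
    grind
  · have := hmove v hsign (by simpa [Int.sign_mul_self_eq_abs] using hv)
    simp only [hnet, Pi.sub_apply, Pi.mul_apply, Pi.ofNat_apply, Pi.single_apply, hyv.symm]
    grind

theorem exists_reorients_abs_net_le_two (ht : Γ.IsBidirection t) (hconn : Γ.IsConnected t)
    (heven : ∀ v, 2 ∣ Γ.net t v) (hw : ∃ p, t p ≠ 0 ∧ Γ.vert p = w) :
    ∃ t', Γ.Reorients t t' ∧ (∀ v ≠ w, Γ.net t' v = 0) ∧ |Γ.net t' w| ≤ 2 := by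
  obtain ⟨τ, ⟨hτ, hτ0⟩, hmin⟩ := (measure fun τ => (Γ.net τ w).natAbs).wf.has_min
    {τ | Γ.Reorients t τ ∧ ∀ v ≠ w, Γ.net τ v = 0}
    (exists_reorients_net_eq_zero_of_ne ht hconn heven hw)
  refine ⟨τ, hτ, hτ0, not_lt.1 fun hlt => ?_⟩
  have hτbi := hτ.isBidirection ht
  have hpos : 0 < (Γ.net τ w).sign * Γ.net τ w := by rw [Int.sign_mul_self_eq_abs]; omega
  have hsign : |(Γ.net τ w).sign| = 1 :=
    Int.abs_sign_of_ne_zero (right_ne_zero_of_mul hpos.ne')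
  obtain ⟨⟨z, s⟩, hz, hzpos⟩ := exists_reaches_mul_net_pos hτbi
    (minCut_two_of_two_dvd_net hτbi (hτ.two_dvd_net heven)) hsign hpos
  obtain rfl : z = w := by_contra fun hzw => by simp [hτ0 z hzw] at hzpos
  obtain ⟨τ', hτ', hnet⟩ := hz.exists_reorients
  refine hmin τ' ⟨hτ.trans hτ', fun v hv => ?_⟩ ?_
  · simp [hnet, hτ0 v hv, hv]
  · have hs : |s| = 1 := (hz.abs_snd hτbi).trans (by rw [abs_neg, hsign])
    rw [lt_abs] at hlt
    dsimp only at hzpos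
    change (Γ.net τ' z).natAbs < (Γ.net τ z).natAbs
    simp only [hnet, Pi.sub_apply, Pi.mul_apply, Pi.ofNat_apply, Pi.single_eq_same]
    rcases eq_or_eq_neg_of_abs_eq hs with rfl | rfl
    · rw [Int.sign_eq_one_of_pos (by omega)]; omega
    · rw [Int.sign_eq_neg_one_of_neg (by omega)]; omega

theorem exists_reorients_net_eq_zero (ht : Γ.IsBidirection t) (hconn : Γ.IsConnected t)
    (heven : ∀ v, 2 ∣ Γ.net t v) (hsum : 4 ∣ ∑ p, t p) :
    ∃ t', Γ.Reorients t t' ∧ Γ.net t' = 0 := by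
  by_cases hp : ∃ p, t p ≠ 0
  · obtain ⟨p, hp⟩ := hp
    obtain ⟨t', ht', h0, hle⟩ := exists_reorients_abs_net_le_two ht hconn heven ⟨p, hp, rfl⟩
    have := Fintype.ofFinite V
    have hnet : ∑ v, Γ.net t' v = Γ.net t' (Γ.vert p) :=
      Fintype.sum_eq_single _ h0
    rw [sum_net] at hnet
    have := ht'.four_dvd_sum_sub ht
    rw [abs_le] at hle
    refine ⟨t', ht', funext fun v => ?_⟩
    rcases eq_or_ne v (Γ.vert p) with rfl | hv
    · rw [Pi.zero_apply]; omega
    · exact h0 v hv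
  · push Not at hp
    exact ⟨t, .refl t, funext fun v => net_eq_zero fun p _ => hp p⟩

theorem exists_reorients_net_eq_single (ht : Γ.IsBidirection t) (hconn : Γ.IsConnected t)
    (heven : ∀ v, 2 ∣ Γ.net t v) (hw : ∃ p, t p ≠ 0 ∧ Γ.vert p = w) (hsum : ¬ 4 ∣ ∑ p, t p) :
    ∃ t', Γ.Reorients t t' ∧ Γ.net t' = Pi.single w 2 := by
  obtain ⟨t', ht', h0, hle⟩ := exists_reorients_abs_net_le_two ht hconn heven hw
  have hsingle : Γ.net t' = Pi.single w (Γ.net t' w) := by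
    ext v
    rcases eq_or_ne v w with rfl | hv
    · rw [Pi.single_eq_same]
    · rw [Pi.single_eq_of_ne hv, h0 v hv]
  have := Fintype.ofFinite V
  have hnet : ∑ v, Γ.net t' v = Γ.net t' w := Fintype.sum_eq_single _ h0
  rw [sum_net] at hnet
  have := ht'.four_dvd_sum_sub ht
  rw [abs_le] at hle
  have := ht'.two_dvd_net heven w
  obtain h | h : Γ.net t' w = 2 ∨ Γ.net t' w = -2 := by omega
  · exact ⟨t', ht', h ▸ hsingle⟩
  · refine ⟨-t', ht'.neg, ?_⟩
    rw [net_neg, hsingle, h, ← Pi.single_neg, neg_neg]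

end Balancing

section Decomposition

variable {D V : Type*} {Γ : DartGraph D V} {t : D → ℤ} {x y : V × ℤ} {l : List D} {v : V}
  {K L : Set D}

theorem Trail.ne_zero_of_mem_edges (h : Γ.Trail t x l y) (ht : Γ.IsBidirection t) (hx : |x.2| = 1)
    {p : D} (hp : p ∈ Γ.edges l) : t p ≠ 0 := by
  have hmem {q : D} (hq : q ∈ l) : t q ≠ 0 := by
    have := (h.reaches_of_mem (Set.disjoint_empty _) hq).1.abs_snd ht
    rw [hx, dep, abs_neg] at this
    exact abs_ne_zero.1 (by omega)
  rcases hp with hp | hp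
  · exact hmem hp
  · exact fun h0 => hmem hp ((ht.opp_eq_zero_iff p).2 h0)

theorem Trail.vert_mem_iff {X : Finset V} (h : Γ.Trail t x l y)
    (hX : ∀ p ∈ Γ.edges l, Γ.vert p ∈ X ↔ Γ.vert (Γ.opp p) ∈ X) :
    (y.1 ∈ X ↔ x.1 ∈ X) ∧ ∀ p ∈ Γ.edges l, Γ.vert p ∈ X ↔ x.1 ∈ X := by
  induction h with
  | nil => simp [edges_nil]
  | @cons l p _ _ ih =>
    rw [edges_cons] at hX ⊢
    obtain ⟨hdep, hl⟩ := ih fun q hq => hX q (.inr hq)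
    have hp := hX p (.inl (mem_edges_of_mem List.mem_cons_self))
    refine ⟨hp.symm.trans hdep, ?_⟩
    rintro q (hq | hq)
    · rw [edges_singleton] at hq
      rcases hq with rfl | rfl
      exacts [hdep, hp.symm.trans hdep]
    · exact hl q hq

variable [Fintype D] [DecidableEq V]

theorem boundary_indicator_eq_empty_iff {X : Finset V} (hK : ∀ p ∈ K, Γ.opp p ∈ K)
    (hKt : K ⊆ Function.support t) :
    Γ.boundary (K.indicator t) X = ∅ ↔ ∀ p ∈ K, Γ.vert p ∈ X ↔ Γ.vert (Γ.opp p) ∈ X := by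
  simp only [Finset.eq_empty_iff_forall_notMem, mem_boundary, Set.indicator_apply_ne_zero]
  refine ⟨fun h p hp => ⟨fun hpX => ?_, fun hpX => ?_⟩, fun h p ⟨hp, hpX, hpX'⟩ => ?_⟩
  · exact by_contra fun hpX' => h p ⟨⟨hp, hKt hp⟩, hpX, hpX'⟩
  · refine by_contra fun hpX' => h (Γ.opp p) ⟨⟨hK p hp, hKt (hK p hp)⟩, hpX, ?_⟩
    rwa [Γ.opp_opp]
  · exact hpX' ((h p hp.1).1 hpX)

theorem isConnected_indicator_iff (hK : ∀ p ∈ K, Γ.opp p ∈ K) (hKt : K ⊆ Function.support t) :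
    Γ.IsConnected (K.indicator t) ↔
      ∀ X : Finset V, (∀ p ∈ K, Γ.vert p ∈ X ↔ Γ.vert (Γ.opp p) ∈ X) →
        ∀ p ∈ K, ∀ q ∈ K, Γ.vert p ∈ X → Γ.vert q ∈ X := by
  have hne (p : D) : K.indicator t p ≠ 0 ↔ p ∈ K := by
    rw [Set.indicator_apply_ne_zero]
    exact ⟨And.left, fun h => ⟨h, hKt h⟩⟩
  simp only [IsConnected, hne, ← boundary_indicator_eq_empty_iff hK hKt,
    Finset.nonempty_iff_ne_empty]
  refine forall_congr' fun X =>
    ⟨fun h hX p hp q hq hpX => ?_, fun h ⟨p, hp, hpX⟩ ⟨q, hq, hqX⟩ hX => ?_⟩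
  · exact by_contra fun hqX => h ⟨p, hp, hpX⟩ ⟨q, hq, hqX⟩ hX
  · exact hqX (h hX p hp q hq hpX)

theorem net_sum {ι : Type*} [Fintype ι] (f : ι → D → ℤ) : Γ.net (∑ i, f i) = ∑ i, Γ.net (f i) := by
  ext v
  simp only [net, Finset.sum_apply]
  exact Finset.sum_comm

/-- `K` is the dart set of a connected subgraph of the support of `t` in which all vertices but
`v` are balanced, while `v` has net inflow `2`. -/
structure IsPiece (Γ : DartGraph D V) (t : D → ℤ) (v : V) (K : Set D) : Prop where
  opp_mem : ∀ p ∈ K, Γ.opp p ∈ K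
  subset_support : K ⊆ Function.support t
  isConnected : Γ.IsConnected (K.indicator t)
  net_eq : Γ.net (K.indicator t) = Pi.single v 2

theorem IsPiece.of_indicator (h : Γ.IsPiece (L.indicator t) v K) : Γ.IsPiece t v K ∧ K ⊆ L := by
  have hsub := h.subset_support
  rw [Set.support_indicator] at hsub
  have hKL : K ⊆ L := hsub.trans Set.inter_subset_left
  have heq : K.indicator (L.indicator t) = K.indicator t := by
    rw [Set.indicator_indicator, Set.inter_eq_left.2 hKL]
  exact ⟨⟨h.opp_mem, hsub.trans Set.inter_subset_right, heq ▸ h.isConnected, heq ▸ h.net_eq⟩, hKL⟩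

theorem Trail.isPiece_edges (h : Γ.Trail t (v, -1) l (v, 1)) (ht : Γ.IsBidirection t) :
    Γ.IsPiece t v (Γ.edges l) := by
  have hopp : ∀ p ∈ Γ.edges l, Γ.opp p ∈ Γ.edges l := fun _ => opp_mem_edges.2
  have hsupp : Γ.edges l ⊆ Function.support t := fun _ => h.ne_zero_of_mem_edges ht (by simp)
  refine ⟨hopp, hsupp, (isConnected_indicator_iff hopp hsupp).2 fun X hX p hp q hq => ?_, ?_⟩
  · rw [(h.vert_mem_iff hX).2 p hp, (h.vert_mem_iff hX).2 q hq]
    exact id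
  · rw [h.net_indicator_edges, ← Pi.single_sub]
    rfl

theorem IsPiece.nonempty (hK : Γ.IsPiece t v K) : K.Nonempty := by
  rw [Set.nonempty_iff_ne_empty]
  rintro rfl
  have := congrFun hK.net_eq v
  rw [net_eq_zero fun p _ => by simp, Pi.single_eq_same] at this
  omega

theorem IsPiece.union (hK : Γ.IsPiece t v K) (hL : ∀ p ∈ L, Γ.opp p ∈ L)
    (hLt : L ⊆ Function.support t) (hLconn : Γ.IsConnected (L.indicator t))
    (hLnet : Γ.net (L.indicator t) = 0) (hKL : Disjoint K L)
    {p q : D} (hp : p ∈ K) (hq : q ∈ L) (hpq : Γ.vert p = Γ.vert q) : Γ.IsPiece t v (K ∪ L) := by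
  have hopp : ∀ p ∈ K ∪ L, Γ.opp p ∈ K ∪ L := fun p => Or.imp (hK.opp_mem p) (hL p)
  have hsub := Set.union_subset hK.subset_support hLt
  refine ⟨hopp, hsub, (isConnected_indicator_iff hopp hsub).2 fun X hX => ?_, ?_⟩
  · have hKX := (isConnected_indicator_iff hK.opp_mem hK.subset_support).1 hK.isConnected X
      fun g hg => hX g (.inl hg)
    have hLX := (isConnected_indicator_iff hL hLt).1 hLconn X fun g hg => hX g (.inr hg)
    rintro g (hg | hg) h (hh | hh) hgX
    · exact hKX g hg h hh hgX
    · exact hLX q hq h hh (hpq ▸ hKX g hg p hp hgX)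
    · exact hKX p hp h hh (hpq ▸ hLX g hg q hq hgX)
    · exact hLX g hg h hh hgX
  · rw [Set.indicator_union_of_disjoint hKL]
    change Γ.net (K.indicator t + L.indicator t) = _
    rw [net_add, hK.net_eq, hLnet, add_zero]

theorem net_indicator_compl_iUnion {n : ℕ} {K : Fin n → Set D} (hK : ∀ i, Γ.IsPiece t v (K i))
    (hdisj : Pairwise fun i j => Disjoint (K i) (K j)) (hnet : Γ.net t = Pi.single v (2 * n)) :
    Γ.net ((⋃ i, K i)ᶜ.indicator t) = 0 := by
  have hsum : (⋃ i, K i).indicator t = ∑ i, (K i).indicator t := by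
    have := Finset.indicator_biUnion (f := t) univ K fun i _ j _ hij => hdisj hij
    simp only [mem_univ, Set.iUnion_true] at this
    rw [this]
    ext; simp
  rw [Set.indicator_compl, net_sub, hsum, net_sum, hnet]
  simp only [(hK _).net_eq, Finset.sum_const, card_univ, Fintype.card_fin]
  rw [← Pi.single_smul, ← Pi.single_sub, nsmul_eq_mul, mul_comm, Nat.cast_mul, Nat.cast_ofNat,
    sub_self, Pi.single_zero]

theorem IsConnected.exists_vert_eq (hconn : Γ.IsConnected t) (hK : ∀ p ∈ K, Γ.opp p ∈ K)
    (hKt : K ⊂ Function.support t) (hK0 : K.Nonempty) :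
    ∃ p ∈ K, ∃ q ∈ Function.support t \ K, Γ.vert p = Γ.vert q := by
  classical
  by_contra! h
  obtain ⟨q, hqt, hqK⟩ := Set.exists_of_ssubset hKt
  obtain ⟨p, hp⟩ := hK0
  let X : Finset V := ({p | p ∈ K} : Finset D).image Γ.vert
  obtain ⟨g, hg⟩ := hconn X ⟨p, hKt.1 hp, mem_image_of_mem _ (by simpa using hp)⟩
    ⟨q, hqt, by simpa [X] using fun p hp => h p hp q ⟨hqt, hqK⟩⟩
  simp only [mem_boundary, X, mem_image, mem_filter_univ, not_exists, not_and] at hg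
  obtain ⟨hgt, ⟨f, hf, hfg⟩, hgX⟩ := hg
  by_cases hgK : g ∈ K
  · exact hgX _ (hK g hgK) rfl
  · exact h f hf g ⟨hgt, hgK⟩ hfg

variable [Finite V]

theorem exists_isPiece (ht : Γ.IsBidirection t) {n : ℕ}
    (hnet : Γ.net t = Pi.single v (2 * (n + 1))) :
    ∃ K, Γ.IsPiece t v K := by
  have heven (z : V) : 2 ∣ Γ.net t z := by
    rw [hnet, Pi.single_apply]; split_ifs <;> simp
  obtain ⟨⟨z, s⟩, ⟨l, hl, hl0⟩, hpos⟩ := exists_reaches_mul_net_pos (s := 1) (v := v) ht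
    (minCut_two_of_two_dvd_net ht heven) abs_one (by rw [hnet, Pi.single_eq_same]; omega)
  obtain rfl : z = v := by_contra fun hz => by simp [hnet, hz] at hpos
  have hs : |s| = 1 := Reaches.abs_snd ⟨l, hl, hl0⟩ ht
  obtain rfl : s = 1 := by
    rcases eq_or_eq_neg_of_abs_eq hs with rfl | rfl
    · rfl
    · rw [hnet, Pi.single_eq_same] at hpos; omega
  exact ⟨_, hl.isPiece_edges ht⟩

theorem exists_pairwise_disjoint_isPiece (ht : Γ.IsBidirection t) {n : ℕ}
    (hnet : Γ.net t = Pi.single v (2 * n)) :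
    ∃ K : Fin n → Set D, (∀ i, Γ.IsPiece t v (K i)) ∧ Pairwise fun i j => Disjoint (K i) (K j) := by
  induction n generalizing t with
  | zero => exact ⟨fun _ => ∅, fun i => i.elim0, fun i => i.elim0⟩
  | succ n ih =>
    obtain ⟨L, hL⟩ := exists_isPiece ht (by exact_mod_cast hnet)
    have hLc : ∀ p ∈ Lᶜ, Γ.opp p ∈ Lᶜ := fun p hp hp' => hp (by
      simpa only [Γ.opp_opp] using hL.opp_mem _ hp')
    obtain ⟨K, hK, hdisj⟩ := ih (ht.indicator hLc) (by
      rw [Set.indicator_compl, net_sub, hL.net_eq, hnet, ← Pi.single_sub]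
      congr 1; push_cast; ring)
    have hLK (i) : Disjoint L (K i) :=
      Set.disjoint_left.2 fun p hp hpK => (hK i).of_indicator.2 hpK hp
    refine ⟨Fin.cons L K, Fin.cases hL fun i => (hK i).of_indicator.1, ?_⟩
    intro i j hij
    induction i using Fin.cases with
    | zero =>
      induction j using Fin.cases with
      | zero => exact absurd rfl hij
      | succ j => exact hLK j
    | succ i =>
      induction j using Fin.cases with
      | zero => exact (hLK i).symm
      | succ j => exact hdisj fun h => hij (congrArg Fin.succ h)

theorem exists_balanced_component (ht : Γ.IsBidirection t) (hnet : Γ.net t = 0) {r : D}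
    (hr : t r ≠ 0) :
    ∃ L ⊆ Function.support t, r ∈ L ∧ (∀ p ∈ L, Γ.opp p ∈ L) ∧ Γ.IsConnected (L.indicator t) ∧
      Γ.net (L.indicator t) = 0 := by
  have := Fintype.ofFinite V
  obtain ⟨Y, ⟨hrY, hY⟩, hmin⟩ :=
    (Set.toFinite {Y | Γ.vert r ∈ Y ∧ Γ.boundary t Y = ∅}).exists_minimal
      ⟨univ, mem_univ _, by ext; simp [mem_boundary]⟩
  have hYopp {p : D} (hp : t p ≠ 0) (hpY : Γ.vert p ∈ Y) : Γ.vert (Γ.opp p) ∈ Y :=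
    by_contra fun h => Finset.notMem_empty p (hY ▸ mem_boundary.2 ⟨hp, hpY, h⟩)
  let L : Set D := Function.support t ∩ {p | Γ.vert p ∈ Y}
  have hLopp : ∀ p ∈ L, Γ.opp p ∈ L := fun p hp =>
    ⟨mt (ht.opp_eq_zero_iff p).1 hp.1, hYopp hp.1 hp.2⟩
  refine ⟨L, Set.inter_subset_left, ⟨hr, hrY⟩, hLopp,
    (isConnected_indicator_iff hLopp Set.inter_subset_left).2 fun X hX p hp q hq hpX => ?_,
    funext fun v => ?_⟩
  · by_cases hrX : Γ.vert r ∈ X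
    · have hYX : Y ≤ Y ∩ X := hmin ⟨mem_inter.2 ⟨hrY, hrX⟩, Finset.eq_empty_of_forall_notMem
        fun g hg => ?_⟩ inter_subset_left
      · exact (mem_inter.1 (hYX hq.2)).2
      · simp only [mem_boundary, mem_inter] at hg
        exact hg.2.2 ⟨hYopp hg.1 hg.2.1.1, (hX g ⟨hg.1, hg.2.1.1⟩).1 hg.2.1.2⟩
    · have hYX : Y ≤ Y \ X := hmin ⟨mem_sdiff.2 ⟨hrY, hrX⟩, Finset.eq_empty_of_forall_notMem
        fun g hg => ?_⟩ sdiff_subset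
      · exact absurd hpX (mem_sdiff.1 (hYX hp.2)).2
      · simp only [mem_boundary, mem_sdiff] at hg
        exact hg.2.2 ⟨hYopp hg.1 hg.2.1.1, mt (hX g ⟨hg.1, hg.2.1.1⟩).2 hg.2.1.2⟩
  · by_cases hv : v ∈ Y
    · rw [← hnet]
      refine net_congr fun p hp => ?_
      simp [L, hp, hv]
    · exact net_eq_zero fun p hp => Set.indicator_of_notMem (fun h => hv (hp ▸ h.2)) t

theorem exists_isPiece_union_of_iUnion_ne (ht : Γ.IsBidirection t) (hconn : Γ.IsConnected t)
    {n : ℕ} (hn : n ≠ 0) (hnet : Γ.net t = Pi.single v (2 * n)) {K : Fin n → Set D}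
    (hK : ∀ i, Γ.IsPiece t v (K i)) (hdisj : Pairwise fun i j => Disjoint (K i) (K j))
    (hne : ⋃ i, K i ≠ Function.support t) :
    ∃ i, ∃ L : Set D, L.Nonempty ∧ (∀ j, Disjoint (K j) L) ∧ Γ.IsPiece t v (K i ∪ L) := by
  set U := ⋃ i, K i
  have hUopp : ∀ p ∈ U, Γ.opp p ∈ U := fun p hp =>
    have ⟨i, hi⟩ := Set.mem_iUnion.1 hp
    Set.mem_iUnion.2 ⟨i, (hK i).opp_mem p hi⟩
  have hUc : ∀ p ∈ Uᶜ, Γ.opp p ∈ Uᶜ := fun p hp hp' => hp (by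
    simpa only [Γ.opp_opp] using hUopp _ hp')
  have hU0 : U.Nonempty :=
    (hK ⟨0, Nat.pos_of_ne_zero hn⟩).nonempty.mono (Set.subset_iUnion K _)
  obtain ⟨q, hqU, r, ⟨hrt, hrU⟩, hqr⟩ := hconn.exists_vert_eq hUopp
    (lt_of_le_of_ne (Set.iUnion_subset fun i => (hK i).subset_support) hne) hU0
  obtain ⟨i, hqi⟩ := Set.mem_iUnion.1 hqU
  obtain ⟨L, hLsub, hrL, hLopp, hLconn, hLnet⟩ := exists_balanced_component (ht.indicator hUc)
    (net_indicator_compl_iUnion hK hdisj hnet) (r := r) (by simpa [hrU] using hrt)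
  rw [Set.support_indicator] at hLsub
  have hLK (j) : Disjoint (K j) L := Set.disjoint_left.2 fun p hpK hpL =>
    (hLsub hpL).1 (Set.mem_iUnion.2 ⟨j, hpK⟩)
  rw [Set.indicator_indicator, Set.inter_eq_left.2 fun p hp => (hLsub hp).1] at hLconn hLnet
  exact ⟨i, L, ⟨r, hrL⟩, hLK, (hK i).union hLopp (fun p hp => (hLsub hp).2) hLconn hLnet (hLK i)
    hqi hrL hqr⟩

theorem exists_isPiece_iUnion_eq_support (ht : Γ.IsBidirection t) (hconn : Γ.IsConnected t)
    {n : ℕ} (hn : n ≠ 0) (hnet : Γ.net t = Pi.single v (2 * n)) :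
    ∃ K : Fin n → Set D, (∀ i, Γ.IsPiece t v (K i)) ∧
      (Pairwise fun i j => Disjoint (K i) (K j)) ∧ ⋃ i, K i = Function.support t := by
  obtain ⟨K, ⟨hK, hdisj⟩, hmax⟩ := (Set.toFinite {K : Fin n → Set D |
    (∀ i, Γ.IsPiece t v (K i)) ∧ Pairwise fun i j => Disjoint (K i) (K j)}).exists_maximal
      (exists_pairwise_disjoint_isPiece ht hnet)
  refine ⟨K, hK, hdisj, by_contra fun hne => ?_⟩
  obtain ⟨i, L, ⟨r, hrL⟩, hLK, hL⟩ :=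
    exists_isPiece_union_of_iUnion_ne ht hconn hn hnet hK hdisj hne
  have hle : Function.update K i (K i ∪ L) ≤ K := by
    refine hmax ⟨fun j => ?_, fun j k hjk => ?_⟩ (le_update_self_iff.2 Set.subset_union_left)
    · rcases eq_or_ne j i with rfl | hj
      · rwa [Function.update_self]
      · rw [Function.update_of_ne hj]
        exact hK j
    · rcases eq_or_ne j i with rfl | hj
      · rw [Function.update_self, Function.update_of_ne hjk.symm]
        exact (hdisj hjk).union_left (hLK k).symm
      rcases eq_or_ne k i with rfl | hk
      · rw [Function.update_self, Function.update_of_ne hj]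
        exact (hdisj hjk).union_right (hLK j)
      · rw [Function.update_of_ne hj, Function.update_of_ne hk]
        exact hdisj hjk
  exact Set.disjoint_left.1 (hLK i) (hle i (by simp [hrL])) hrL

end Decomposition

section TightSets

variable {D V : Type*} {Γ : DartGraph D V} {t t' : D → ℤ} {a : V}
  [Fintype D]

theorem Reorients.cutWeight_eq (h : Γ.Reorients t t') (c : V → ℤ) :
    Γ.cutWeight c t' = Γ.cutWeight c t := by
  refine Finset.sum_congr rfl fun p _ => ?_
  rcases h p with ⟨h₁, h₂⟩ | ⟨h₁, h₂⟩ <;> rw [h₁, h₂]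
  rw [mul_neg, mul_neg, ← neg_add, abs_neg]

theorem cutWeight_sdiff_add_cutWeight_sdiff_le {c d : V → ℤ} (ht : Γ.IsBidirection t)
    (hc : ∀ v, |c v| ≤ 1) (hd : ∀ v, |d v| ≤ 1) :
    Γ.cutWeight (fun v => if d v = 0 then c v else 0) t +
        Γ.cutWeight (fun v => if c v = 0 then d v else 0) t ≤
      Γ.cutWeight c t + Γ.cutWeight d t := by
  simp only [cutWeight, ← Finset.sum_add_distrib]
  refine Finset.sum_le_sum fun p _ => ?_
  have hu := abs_le.1 (hc (Γ.vert p))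
  have hw := abs_le.1 (hc (Γ.vert (Γ.opp p)))
  have hu' := abs_le.1 (hd (Γ.vert p))
  have hw' := abs_le.1 (hd (Γ.vert (Γ.opp p)))
  by_cases hp : t p = 0
  · simp [hp, (ht.opp_eq_zero_iff p).2 hp]
  have hopp : t (Γ.opp p) = 1 ∨ t (Γ.opp p) = -1 :=
    (ht.cases _).resolve_left (mt (ht.opp_eq_zero_iff p).1 hp)
  rcases (ht.cases p).resolve_left hp with h | h <;> rcases hopp with h' | h' <;> rw [h, h'] <;>
    clear h h' hc hd <;> grind

/-- `X` is the support of a potential with values `±1` whose cut weight is at most `8`. -/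
def IsTight (Γ : DartGraph D V) (t : D → ℤ) (X : Finset V) : Prop :=
  ∃ c : V → ℤ, (∀ v, |c v| ≤ 1) ∧ (∀ v, v ∈ X ↔ c v ≠ 0) ∧ Γ.cutWeight c t ≤ 8

theorem Reorients.isTight {X : Finset V} (h : Γ.Reorients t t') (hX : Γ.IsTight t' X) :
    Γ.IsTight t X :=
  hX.imp fun c hc => ⟨hc.1, hc.2.1, h.cutWeight_eq c ▸ hc.2.2⟩

variable [DecidableEq V]

theorem Reorients.minCut {k : ℕ} (h : Γ.Reorients t t') (hcut : Γ.MinCut t k) :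
    Γ.MinCut t' k := fun X => by
  rw [h.boundary_eq]; exact hcut X

/-- `X` is a disjoint union of tight sets. -/
inductive IsTightUnion (Γ : DartGraph D V) (t : D → ℤ) : Finset V → Prop
  | empty : IsTightUnion Γ t ∅
  | union {X Y : Finset V} :
      Γ.IsTight t X → IsTightUnion Γ t Y → Disjoint X Y → IsTightUnion Γ t (X ∪ Y)

theorem IsTight.sdiff {X P : Finset V} (hX : Γ.IsTight t X) (hP : Γ.IsTight t P)
    (ht : Γ.IsBidirection t) (hcut : Γ.MinCut t 4) (hPX : (Γ.boundary t (P \ X)).Nonempty) :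
    Γ.IsTight t (X \ P) := by
  obtain ⟨c, hc, hcX, hcw⟩ := hX
  obtain ⟨d, hd, hdP, hdw⟩ := hP
  have hPX_le := hcut _ hPX
  have hle := two_mul_card_boundary_le_cutWeight (Γ := Γ) (t := t) (X := P \ X)
    (c := fun v => if c v = 0 then d v else 0) fun v => by simp [hcX, hdP, and_comm]
  have := cutWeight_sdiff_add_cutWeight_sdiff_le ht hc hd
  refine ⟨fun v => if d v = 0 then c v else 0, fun v => ?_, fun v => ?_, by omega⟩
  · dsimp only
    split_ifs
    exacts [hc v, by simp]
  · simp [hcX, hdP, and_comm]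

theorem IsTightUnion.sdiff {Y P : Finset V} (hY : Γ.IsTightUnion t Y) (hP : Γ.IsTight t P)
    (ht : Γ.IsBidirection t) (hconn : Γ.IsConnected t) (hcut : Γ.MinCut t 4)
    (hPne : ∃ p, t p ≠ 0 ∧ Γ.vert p ∉ P) (hPY : ∃ p, t p ≠ 0 ∧ Γ.vert p ∈ P \ Y) :
    Γ.IsTightUnion t (Y \ P) := by
  induction hY with
  | empty => rw [empty_sdiff]; exact .empty
  | @union X Y hX _ hXY ih =>
    obtain ⟨p, hp, hpP⟩ := hPY
    obtain ⟨hpP, hpXY⟩ := mem_sdiff.1 hpP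
    obtain ⟨hpX, hpY⟩ := notMem_union.1 hpXY
    rw [union_sdiff_distrib]
    refine .union (hX.sdiff hP ht hcut (hconn _ ⟨p, hp, mem_sdiff.2 ⟨hpP, hpX⟩⟩ ?_))
      (ih ⟨p, hp, mem_sdiff.2 ⟨hpP, hpY⟩⟩) (hXY.mono sdiff_subset sdiff_subset)
    exact hPne.imp fun q hq => ⟨hq.1, fun h => hq.2 (mem_sdiff.1 h).1⟩

theorem sum_net_eq_sum_of_vert_mem {X : Finset V} (hX : ∀ p, t p ≠ 0 → Γ.vert p ∈ X) :
    ∑ v ∈ X, Γ.net t v = ∑ p, t p := by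
  rw [sum_mem_net]
  exact Finset.sum_congr rfl fun p _ => ite_eq_left_iff.2 fun h => (not_not.1 (mt (hX p) h)).symm

variable [Finite V]

theorem IsTight.four_dvd_sum_net {X : Finset V} (hX : Γ.IsTight t X)
    (heven : ∀ v, 2 ∣ Γ.net t v) (h : Γ.Reorients t t') (hnet : Γ.net t' = 3 * Γ.net t) :
    4 ∣ ∑ v ∈ X, Γ.net t v := by
  have := Fintype.ofFinite V
  obtain ⟨c, hc, hcX, hcw⟩ := hX
  have hpotential : ∑ v, c v * Γ.net t v = 0 := by
    have hle := h.two_mul_sum_mul_net_le_cutWeight c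
    have hge := h.neg.two_mul_sum_mul_net_le_cutWeight c
    have htriple : ∑ v, c v * Γ.net t' v = 3 * ∑ v, c v * Γ.net t v := by
      rw [hnet, Finset.mul_sum]
      exact Finset.sum_congr rfl fun v _ => mul_left_comm _ _ _
    have h2 : 2 ∣ ∑ v, c v * Γ.net t v := Finset.dvd_sum fun v _ => (heven v).mul_left _
    simp only [net_neg, Pi.neg_apply, mul_neg, Finset.sum_neg_distrib] at hge
    omega
  have hsum : ∑ v ∈ X, Γ.net t v = ∑ v ∈ X, (1 - c v) * Γ.net t v := by
    rw [← Finset.sum_subset X.subset_univ fun v _ hv => by simp_all] at hpotential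
    simp only [sub_mul, one_mul, Finset.sum_sub_distrib, hpotential, sub_zero]
  rw [hsum]
  refine Finset.dvd_sum fun v hv => mul_dvd_mul (a := 2) (c := 2) ?_ (heven v)
  have := abs_le.1 (hc v)
  have := (hcX v).1 hv
  omega

theorem IsTightUnion.four_dvd_sum_net {Y : Finset V} (hY : Γ.IsTightUnion t Y)
    (heven : ∀ v, 2 ∣ Γ.net t v) (h : Γ.Reorients t t') (hnet : Γ.net t' = 3 * Γ.net t) :
    4 ∣ ∑ v ∈ Y, Γ.net t v := by
  induction hY with
  | empty => simp
  | union hX _ hXY ih =>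
    rw [Finset.sum_union hXY]
    exact dvd_add (hX.four_dvd_sum_net heven h hnet) ih

theorem exists_isTight_of_net_eq_single (ht : Γ.IsBidirection t) (hcut : Γ.MinCut t 4)
    (ha : Γ.net t = Pi.single a 2) (hno : ∀ τ, Γ.Reorients t τ → Γ.net τ ≠ Pi.single a 6) :
    ∃ P, Γ.IsTight t P ∧ a ∈ P := by
  have hunreached : ¬ Γ.Reaches t ∅ (a, 1) (a, -1) := fun hr => by
    obtain ⟨τ, hτ, hnet⟩ := hr.exists_reorients
    refine hno τ hτ ?_
    rw [hnet, ha]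
    ext v
    rcases eq_or_ne v a with rfl | hv <;> simp [*]
  have hbarrier : Γ.barrier t (a, 1) a = 1 := by
    simpa using (barrier_mul_eq_one_iff (s := 1) abs_one).2 ⟨.rfl, hunreached⟩
  have := Fintype.ofFinite V
  refine ⟨Γ.barrierSupport t (a, 1), ⟨Γ.barrier t (a, 1), fun _ => abs_barrier_le_one,
    fun _ => mem_barrierSupport, ?_⟩, mem_barrierSupport.2 (by simp [hbarrier])⟩
  refine (cutWeight_barrier_le ht (by simp) hcut).trans_eq ?_
  simp [ha, Pi.single_apply, hbarrier]

-- A maximal disjoint union of tight sets would cover all vertices, making the sum of the net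
-- inflows divisible by `4`.
theorem MinCut.exists_reorients_net_eq_single_six (hcut : Γ.MinCut t 4) (ht : Γ.IsBidirection t)
    (hconn : Γ.IsConnected t) (heven : ∀ v, 2 ∣ Γ.net t v) (hsum : ¬ 4 ∣ ∑ p, t p)
    (h : Γ.Reorients t t') (hnet : Γ.net t' = 3 * Γ.net t) :
    ∃ v τ, Γ.Reorients t τ ∧ Γ.net τ = Pi.single v 6 := by
  by_contra! hno
  have htight {p : D} (hp : t p ≠ 0) : ∃ P, Γ.IsTight t P ∧ Γ.vert p ∈ P := by
    obtain ⟨τ, hτ, hτnet⟩ := exists_reorients_net_eq_single ht hconn heven ⟨p, hp, rfl⟩ hsum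
    obtain ⟨P, hP, hpP⟩ := exists_isTight_of_net_eq_single (hτ.isBidirection ht) (hτ.minCut hcut)
      hτnet fun τ' hτ' => hno _ τ' (hτ.trans hτ')
    exact ⟨P, hτ.isTight hP, hpP⟩
  obtain ⟨Y, hY, hmax⟩ := (Set.toFinite {Y | Γ.IsTightUnion t Y}).exists_maximal
    ⟨∅, .empty⟩
  obtain ⟨p, hp, hpY⟩ : ∃ p, t p ≠ 0 ∧ Γ.vert p ∉ Y := by
    by_contra! hall
    exact hsum (sum_net_eq_sum_of_vert_mem hall ▸ hY.four_dvd_sum_net heven h hnet)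
  obtain ⟨P, hP, hpP⟩ := htight hp
  have hPne : ∃ q, t q ≠ 0 ∧ Γ.vert q ∉ P := by
    by_contra! hall
    exact hsum (sum_net_eq_sum_of_vert_mem hall ▸ hP.four_dvd_sum_net heven h hnet)
  have hPY := IsTightUnion.union hP
    (hY.sdiff hP ht hconn hcut hPne ⟨p, hp, mem_sdiff.2 ⟨hpP, hpY⟩⟩) disjoint_sdiff
  rw [union_sdiff_self_eq_union] at hPY
  exact hpY (hmax hPY subset_union_right (mem_union_left Y hpP))

end TightSets

section TwoCuts

variable {D V : Type*} {Γ : DartGraph D V} {t t' τ σ : D → ℤ} {X : Finset V} {p q d : D}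

/-- The graph in which the edges of the darts `p` and `q` are replaced by one edge consisting of
`p` and `q` and another one consisting of their opposites; this amounts to conjugating `Γ.opp`. -/
def splice [DecidableEq D] (Γ : DartGraph D V) (p q : D) : DartGraph D V where
  opp d := Equiv.swap q (Γ.opp p) (Γ.opp (Equiv.swap q (Γ.opp p) d))
  vert := Γ.vert
  opp_opp d := by simp [Γ.opp_opp]
  opp_ne d h := Γ.opp_ne _ (by simpa using congrArg (Equiv.swap q (Γ.opp p)) h)

/-- The darts of the subgraph supporting `t` that are attached in `X`. -/
def side (Γ : DartGraph D V) (t : D → ℤ) (X : Finset V) : Set D := {d | t d ≠ 0 ∧ Γ.vert d ∈ X}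

theorem Reorients.side_eq (h : Γ.Reorients t t') : Γ.side t' X = Γ.side t X := by
  simp only [side, h.ne_zero_iff]

variable [Fintype D] [DecidableEq V]

/-- The edges of `p` and `q` form a cut of the subgraph supporting `t`, with `p` and `q` in `X`. -/
structure IsTwoCut (Γ : DartGraph D V) (t : D → ℤ) (X : Finset V) (p q : D) : Prop where
  ne : p ≠ q
  mem_boundary_iff : ∀ d, d ∈ Γ.boundary t X ↔ d = p ∨ d = q

theorem exists_isTwoCut_of_not_minCut (ht : Γ.IsBidirection t)
    (heven : ∀ v, 2 ∣ Γ.net t v) (hcut : ¬ Γ.MinCut t 4) : ∃ X p q, Γ.IsTwoCut t X p q := by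
  classical
  simp only [MinCut, not_forall, not_le] at hcut
  obtain ⟨X, hX, hlt⟩ := hcut
  have := two_dvd_sum_net_sub_card_boundary ht X
  have := Finset.dvd_sum fun v (_ : v ∈ X) => heven v
  have := hX.card_pos
  obtain ⟨p, q, hpq, hbdry⟩ := Finset.card_eq_two.1 (show #(Γ.boundary t X) = 2 by omega)
  exact ⟨X, p, q, hpq, by simp [hbdry]⟩

namespace IsTwoCut

theorem left (h : Γ.IsTwoCut t X p q) : t p ≠ 0 ∧ Γ.vert p ∈ X ∧ Γ.vert (Γ.opp p) ∉ X :=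
  mem_boundary.1 ((h.mem_boundary_iff p).2 (.inl rfl))

theorem right (h : Γ.IsTwoCut t X p q) : t q ≠ 0 ∧ Γ.vert q ∈ X ∧ Γ.vert (Γ.opp q) ∉ X :=
  mem_boundary.1 ((h.mem_boundary_iff q).2 (.inr rfl))

theorem ne_opp (h : Γ.IsTwoCut t X p q) : q ≠ Γ.opp p := by
  rintro rfl; exact h.left.2.2 h.right.2.1

theorem compl [Fintype V] (h : Γ.IsTwoCut t X p q) (ht : Γ.IsBidirection t) :
    Γ.IsTwoCut t Xᶜ (Γ.opp p) (Γ.opp q) := by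
  refine ⟨fun hpq => h.ne (by rw [← Γ.opp_opp p, hpq, Γ.opp_opp]), fun d => ?_⟩
  rw [eq_opp_comm, eq_opp_comm, ← h.mem_boundary_iff, mem_boundary, mem_boundary, Γ.opp_opp,
    Ne, Ne, ht.opp_eq_zero_iff, mem_compl, mem_compl]
  tauto

theorem vert_opp_mem (h : Γ.IsTwoCut t X p q) (hd : d ∈ Γ.side t X) (hp : d ≠ p) (hq : d ≠ q) :
    Γ.vert (Γ.opp d) ∈ X :=
  by_contra fun hdX =>
    ((h.mem_boundary_iff d).1 (mem_boundary.2 ⟨hd.1, hd.2, hdX⟩)).elim hp hq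

theorem card_support_side_lt (h : Γ.IsTwoCut t X p q) (ht : Γ.IsBidirection t) :
    #{d | (Γ.side t X).indicator t d ≠ 0} < #{d | t d ≠ 0} := by
  refine Finset.card_lt_card ((Finset.ssubset_iff_of_subset fun d hd => ?_).2 ⟨Γ.opp p, ?_, ?_⟩)
  · simp_all
  · simpa [ht.opp_eq_zero_iff] using h.left.1
  · simpa using fun hp : Γ.opp p ∈ Γ.side t X => absurd hp.2 h.left.2.2

section

variable [DecidableEq D]

theorem splice_opp_left (h : Γ.IsTwoCut t X p q) : (Γ.splice p q).opp p = q := by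
  simp [splice, Equiv.swap_apply_of_ne_of_ne h.ne (Γ.opp_ne p).symm]

theorem splice_opp_right (h : Γ.IsTwoCut t X p q) : (Γ.splice p q).opp q = p :=
  (eq_opp_comm.2 h.splice_opp_left).symm

theorem splice_opp_of_ne (h : Γ.IsTwoCut t X p q) (hd : d ∈ Γ.side t X) (hp : d ≠ p)
    (hq : d ≠ q) : (Γ.splice p q).opp d = Γ.opp d := by
  have hdp : d ≠ Γ.opp p := by rintro rfl; exact h.left.2.2 hd.2
  have hdq : Γ.opp d ≠ q := by
    rintro rfl; exact h.right.2.2 (by rw [Γ.opp_opp]; exact hd.2)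
  have hdp' : Γ.opp d ≠ Γ.opp p := fun hdp => hp (by rw [← Γ.opp_opp d, hdp, Γ.opp_opp])
  simp only [splice, Equiv.swap_apply_of_ne_of_ne hq hdp, Equiv.swap_apply_of_ne_of_ne hdq hdp']

theorem splice_opp_mem_side (h : Γ.IsTwoCut t X p q) (ht : Γ.IsBidirection t)
    (hd : d ∈ Γ.side t X) : (Γ.splice p q).opp d ∈ Γ.side t X := by
  by_cases hp : d = p
  · rw [hp, h.splice_opp_left]; exact ⟨h.right.1, h.right.2.1⟩
  by_cases hq : d = q
  · rw [hq, h.splice_opp_right]; exact ⟨h.left.1, h.left.2.1⟩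
  · rw [h.splice_opp_of_ne hd hp hq]
    exact ⟨mt (ht.opp_eq_zero_iff d).1 hd.1, h.vert_opp_mem hd hp hq⟩

theorem splice_opp_notMem_side (h : Γ.IsTwoCut t X p q) (ht : Γ.IsBidirection t)
    (hd : d ∉ Γ.side t X) : (Γ.splice p q).opp d ∉ Γ.side t X := fun hmem =>
  hd (by simpa only [(Γ.splice p q).opp_opp] using h.splice_opp_mem_side ht hmem)

theorem isBidirection_splice (h : Γ.IsTwoCut t X p q) (ht : Γ.IsBidirection t) :
    (Γ.splice p q).IsBidirection t := by
  have hswap (d : D) : |t (Equiv.swap q (Γ.opp p) d)| = |t d| := by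
    have heq : |t q| = |t (Γ.opp p)| := by
      rw [(ht p).2, ht.abs_eq_one h.left.1, ht.abs_eq_one h.right.1]
    rw [Equiv.swap_apply_def]
    split_ifs with h₁ h₂
    · rw [h₁, heq]
    · rw [h₂, heq]
    · rfl
  refine fun d => ⟨(ht d).1, ?_⟩
  simp only [splice, hswap, (ht _).2]

theorem vert_notMem_of_splice_opp_mem (h : Γ.IsTwoCut t X p q) (hconn : Γ.IsConnected t)
    {W : Finset V} (hWX : W ⊆ X) (hpW : Γ.vert p ∉ W) (hqW : Γ.vert q ∉ W)
    (hW : ∀ d ∈ Γ.side t X, Γ.vert d ∈ W → Γ.vert ((Γ.splice p q).opp d) ∈ W)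
    (hd : t d ≠ 0) : Γ.vert d ∉ W := by
  intro hdW
  obtain ⟨g, hg⟩ := hconn W ⟨d, hd, hdW⟩ ⟨p, h.left.1, hpW⟩
  obtain ⟨hg0, hgW, hgW'⟩ := mem_boundary.1 hg
  have hgX : g ∈ Γ.side t X := ⟨hg0, hWX hgW⟩
  have hgp : g ≠ p := by rintro rfl; exact hpW hgW
  have hgq : g ≠ q := by rintro rfl; exact hqW hgW
  exact hgW' (h.splice_opp_of_ne hgX hgp hgq ▸ hW g hgX hgW)

theorem isConnected_splice (h : Γ.IsTwoCut t X p q) (ht : Γ.IsBidirection t)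
    (hconn : Γ.IsConnected t) : (Γ.splice p q).IsConnected ((Γ.side t X).indicator t) := by
  refine (isConnected_indicator_iff (fun d => h.splice_opp_mem_side ht) fun d hd => hd.1).2
    fun Z (hZ : ∀ d ∈ Γ.side t X, Γ.vert d ∈ Z ↔ Γ.vert ((Γ.splice p q).opp d) ∈ Z)
      d hd e he (hdZ : Γ.vert d ∈ Z) => show Γ.vert e ∈ Z from ?_
  have hpq : Γ.vert p ∈ Z ↔ Γ.vert q ∈ Z := by
    simpa only [h.splice_opp_left] using hZ p ⟨h.left.1, h.left.2.1⟩
  by_cases hpZ : Γ.vert p ∈ Z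
  · have heZ : Γ.vert e ∉ X \ Z := by
      refine h.vert_notMem_of_splice_opp_mem hconn sdiff_subset (by simp [hpZ])
        (by simp [hpq.1 hpZ]) (fun g hg hgZ => ?_) he.1
      rw [mem_sdiff] at hgZ ⊢
      exact ⟨(h.splice_opp_mem_side ht hg).2, mt (hZ g hg).2 hgZ.2⟩
    simpa [he.2] using heZ
  · refine absurd (mem_inter.2 ⟨hd.2, hdZ⟩) ?_
    refine h.vert_notMem_of_splice_opp_mem hconn inter_subset_left (by simp [hpZ])
      (by simp [mt hpq.2 hpZ]) (fun g hg hgZ => ?_) hd.1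
    rw [mem_inter] at hgZ ⊢
    exact ⟨(h.splice_opp_mem_side ht hg).2, (hZ g hg).1 hgZ.2⟩

theorem reorients_splice (h : Γ.IsTwoCut t X p q) (ht : Γ.IsBidirection t)
    (ht' : Γ.Reorients t t')
    (hpq : (t' p = t p ∧ t' q = t q) ∨ (t' p = -t p ∧ t' q = -t q)) :
    (Γ.splice p q).Reorients ((Γ.side t X).indicator t) ((Γ.side t X).indicator t') := by
  intro d
  by_cases hd : d ∈ Γ.side t X
  · have hd' := h.splice_opp_mem_side ht hd
    rw [Set.indicator_of_mem hd, Set.indicator_of_mem hd, Set.indicator_of_mem hd',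
      Set.indicator_of_mem hd']
    by_cases hp : d = p
    · rwa [hp, h.splice_opp_left]
    by_cases hq : d = q
    · rw [hq, h.splice_opp_right]
      exact hpq.imp And.symm And.symm
    · rw [h.splice_opp_of_ne hd hp hq]
      exact ht' d
  · simp [hd, h.splice_opp_notMem_side ht hd]

theorem reorients_add_apply [Fintype V] (h : Γ.IsTwoCut t X p q) (ht : Γ.IsBidirection t)
    (hτ : (Γ.splice p q).Reorients ((Γ.side t X).indicator t) τ)
    (hσ : (Γ.splice (Γ.opp p) (Γ.opp q)).Reorients ((Γ.side t Xᶜ).indicator t) σ)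
    (hp : (τ p = t p ∧ σ (Γ.opp p) = t (Γ.opp p)) ∨ (τ p = -t p ∧ σ (Γ.opp p) = -t (Γ.opp p)))
    (hd : d ∈ Γ.side t X) :
    ((τ + σ) d = t d ∧ (τ + σ) (Γ.opp d) = t (Γ.opp d)) ∨
      ((τ + σ) d = -t d ∧ (τ + σ) (Γ.opp d) = -t (Γ.opp d)) := by
  have hτ0 {d : D} (hd : Γ.vert d ∉ X) : τ d = 0 := by
    rw [← not_ne_iff, hτ.ne_zero_iff, Set.indicator_apply_ne_zero]
    exact fun hd' => hd hd'.1.2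
  have hσ0 {d : D} (hd : Γ.vert d ∈ X) : σ d = 0 := by
    rw [← not_ne_iff, hσ.ne_zero_iff, Set.indicator_apply_ne_zero]
    exact fun hd' => (mem_compl.1 hd'.1.2) hd
  rw [Pi.add_apply, Pi.add_apply, hσ0 hd.2, add_zero]
  by_cases hdp : d = p
  · rwa [hdp, hτ0 h.left.2.2, zero_add]
  by_cases hdq : d = q
  · have hpX : p ∈ Γ.side t X := ⟨h.left.1, h.left.2.1⟩
    have hqX : q ∈ Γ.side t X := ⟨h.right.1, h.right.2.1⟩
    have hpY : Γ.opp p ∈ Γ.side t Xᶜ := ⟨(h.compl ht).left.1, (h.compl ht).left.2.1⟩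
    have hqY : Γ.opp q ∈ Γ.side t Xᶜ := ⟨(h.compl ht).right.1, (h.compl ht).right.2.1⟩
    have hτpq := hτ p
    have hσpq := hσ (Γ.opp p)
    rw [h.splice_opp_left, Set.indicator_of_mem hpX, Set.indicator_of_mem hqX] at hτpq
    rw [(h.compl ht).splice_opp_left, Set.indicator_of_mem hpY, Set.indicator_of_mem hqY] at hσpq
    rw [hdq, hτ0 h.right.2.2, zero_add]
    have := hpX.1
    have := hpY.1
    grind
  · have hdX := h.vert_opp_mem hd hdp hdq
    rw [hσ0 hdX, add_zero]
    have hτd := hτ d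
    have hd' := h.splice_opp_mem_side ht hd
    rwa [Set.indicator_of_mem hd, Set.indicator_of_mem hd', h.splice_opp_of_ne hd hdp hdq] at hτd

theorem reorients_add [Fintype V] (h : Γ.IsTwoCut t X p q) (ht : Γ.IsBidirection t)
    (hτ : (Γ.splice p q).Reorients ((Γ.side t X).indicator t) τ)
    (hσ : (Γ.splice (Γ.opp p) (Γ.opp q)).Reorients ((Γ.side t Xᶜ).indicator t) σ)
    (hp : (τ p = t p ∧ σ (Γ.opp p) = t (Γ.opp p)) ∨ (τ p = -t p ∧ σ (Γ.opp p) = -t (Γ.opp p))) :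
    Γ.Reorients t (τ + σ) := by
  intro d
  by_cases hd : t d = 0
  · have hd' := (ht.opp_eq_zero_iff d).2 hd
    have hzero {d : D} (hd : t d = 0) : τ d = 0 ∧ σ d = 0 := by
      rw [← not_ne_iff, hτ.ne_zero_iff, ← not_ne_iff (a := σ d), hσ.ne_zero_iff]
      simp [hd]
    simp [hd, hd', hzero]
  by_cases hdX : Γ.vert d ∈ X
  · exact h.reorients_add_apply ht hτ hσ hp ⟨hd, hdX⟩
  · rw [add_comm]
    refine (h.compl ht).reorients_add_apply ht hσ ?_ ?_ ⟨hd, mem_compl.2 hdX⟩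
    · rwa [Γ.opp_opp, Γ.opp_opp, compl_compl]
    · rw [Γ.opp_opp]
      exact hp.imp And.symm And.symm

theorem exists_reorients_net_eq_add [Fintype V] (h : Γ.IsTwoCut t X p q) (ht : Γ.IsBidirection t)
    (hτ : (Γ.splice p q).Reorients ((Γ.side t X).indicator t) τ)
    (hσ : (Γ.splice (Γ.opp p) (Γ.opp q)).Reorients ((Γ.side t Xᶜ).indicator t) σ)
    (hσ0 : Γ.net σ = 0) : ∃ t', Γ.Reorients t t' ∧ Γ.net t' = Γ.net τ := by
  have hτp := hτ p
  have hσp := hσ (Γ.opp p)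
  rw [Set.indicator_of_mem (show p ∈ Γ.side t X from ⟨h.left.1, h.left.2.1⟩)] at hτp
  rw [Set.indicator_of_mem (show Γ.opp p ∈ Γ.side t Xᶜ from
    ⟨(h.compl ht).left.1, (h.compl ht).left.2.1⟩)] at hσp
  obtain hp | hp : ((τ p = t p ∧ σ (Γ.opp p) = t (Γ.opp p)) ∨
        (τ p = -t p ∧ σ (Γ.opp p) = -t (Γ.opp p))) ∨
      ((τ p = t p ∧ (-σ) (Γ.opp p) = t (Γ.opp p)) ∨
        (τ p = -t p ∧ (-σ) (Γ.opp p) = -t (Γ.opp p))) := by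
    rw [Pi.neg_apply, neg_inj, neg_eq_iff_eq_neg]
    tauto
  · exact ⟨τ + σ, h.reorients_add ht hτ hσ hp, by rw [net_add, hσ0, add_zero]⟩
  · exact ⟨τ + -σ, h.reorients_add ht hτ hσ.neg hp,
      by rw [net_add, net_neg, hσ0, neg_zero, add_zero]⟩

end

theorem reorients_alike (h : Γ.IsTwoCut t X p q) (ht : Γ.IsBidirection t)
    (ht' : Γ.Reorients t t')
    (hdvd : 4 ∣ ∑ d, (Γ.side t X).indicator t' d - ∑ d, (Γ.side t X).indicator t d) :
    (t' p = t p ∧ t' q = t q) ∨ (t' p = -t p ∧ t' q = -t q) := by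
  classical
  by_contra hpq
  let u := t' - 2 * (Γ.edges [p]).indicator t'
  have hu : Γ.Reorients t u :=
    ht'.trans (reorients_sub_two_mul_indicator t' fun _ => opp_mem_edges.2)
  have hup : u p = -t' p := by
    simp only [u, edges_singleton, Pi.sub_apply, Pi.mul_apply, Pi.ofNat_apply,
      Set.indicator_of_mem (Set.mem_insert p _)]
    ring
  have huq : u q = t' q := by simp [u, edges_singleton, h.ne.symm, h.ne_opp]
  have hside : (Γ.side t X).indicator u = (Γ.side t X).indicator t' - 2 * Pi.single p (t' p) := by
    ext d
    have hp : p ∈ Γ.side t X := ⟨h.left.1, h.left.2.1⟩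
    rcases eq_or_ne d p with rfl | hdp
    · simp [u, edges_singleton, hp]
    · by_cases hd : d ∈ Γ.side t X
      · have hdp' : d ≠ Γ.opp p := by rintro rfl; exact h.left.2.2 hd.2
        simp [u, edges_singleton, hd, hdp, hdp']
      · simp [hd, hdp]
  have := (h.reorients_splice ht hu (by
    rw [hup, huq]; have := ht' p; have := ht' q; grind)).four_dvd_sum_sub
      ((h.isBidirection_splice ht).indicator fun d => h.splice_opp_mem_side ht)
  rw [hside] at this
  simp only [Pi.sub_apply, Pi.mul_apply, Pi.ofNat_apply, Finset.sum_sub_distrib, ← Finset.mul_sum,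
    Finset.sum_pi_single', mem_univ, if_true] at this
  have := ht'.abs_eq p
  rw [ht.abs_eq_one h.left.1] at this
  rcases eq_or_eq_neg_of_abs_eq this with h | h <;> omega

end IsTwoCut

theorem net_indicator_side (t : D → ℤ) (X : Finset V) (v : V) :
    Γ.net ((Γ.side t X).indicator t) v = if v ∈ X then Γ.net t v else 0 := by
  classical
  split_ifs with hv
  · refine net_congr fun p hp => ?_
    simp only [Set.indicator_apply, side, Set.mem_ofPred_eq, hp, hv, and_true]
    grind
  · exact net_eq_zero fun p hp => Set.indicator_of_notMem (fun h => hv (hp ▸ h.2)) t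

theorem sum_indicator_side (t : D → ℤ) (X : Finset V) :
    ∑ p, (Γ.side t X).indicator t p = ∑ v ∈ X, Γ.net t v := by
  classical
  rw [sum_mem_net]
  refine Finset.sum_congr rfl fun p _ => ?_
  simp only [Set.indicator_apply, side, Set.mem_ofPred_eq]
  grind

theorem exists_isTwoCut_not_dvd [Fintype V] (ht : Γ.IsBidirection t)
    (heven : ∀ v, 2 ∣ Γ.net t v) (hcut : ¬ Γ.MinCut t 4) (hsum : ¬ 4 ∣ ∑ p, t p) :
    ∃ X p q, Γ.IsTwoCut t X p q ∧ ¬ 4 ∣ ∑ v ∈ X, Γ.net t v ∧ 4 ∣ ∑ v ∈ Xᶜ, Γ.net t v := by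
  obtain ⟨X, p, q, h⟩ := exists_isTwoCut_of_not_minCut ht heven hcut
  have hsplit := Finset.sum_add_sum_compl X (Γ.net t)
  rw [sum_net] at hsplit
  have hX := Finset.dvd_sum fun v (_ : v ∈ X) => heven v
  have hXc := Finset.dvd_sum fun v (_ : v ∈ Xᶜ) => heven v
  by_cases h4 : 4 ∣ ∑ v ∈ X, Γ.net t v
  · exact ⟨Xᶜ, _, _, h.compl ht, by omega, by rwa [compl_compl]⟩
  · exact ⟨X, p, q, h, h4, by omega⟩

-- Along a cut of two edges the graph splits into two smaller ones: the induction hypothesis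
-- applies to one of them, and the other one can be balanced.
theorem exists_reorients_net_eq_single_six [Finite V] (ht : Γ.IsBidirection t)
    (hconn : Γ.IsConnected t) (heven : ∀ v, 2 ∣ Γ.net t v) (hsum : ¬ 4 ∣ ∑ p, t p)
    (ht' : Γ.Reorients t t') (hnet : Γ.net t' = 3 * Γ.net t) :
    ∃ v τ, Γ.Reorients t τ ∧ Γ.net τ = Pi.single v 6 := by
  classical
  have := Fintype.ofFinite V
  induction hn : #{p | t p ≠ 0} using Nat.strong_induction_on generalizing Γ t t' with
  | _ n ih => ?_
  by_cases hcut : Γ.MinCut t 4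
  · exact hcut.exists_reorients_net_eq_single_six ht hconn heven hsum ht' hnet
  obtain ⟨X, p, q, h, hX, hXc⟩ := exists_isTwoCut_not_dvd ht heven hcut hsum
  have hsideEven (X : Finset V) (v : V) : 2 ∣ Γ.net ((Γ.side t X).indicator t) v := by
    rw [net_indicator_side]
    split_ifs
    exacts [heven v, dvd_zero 2]
  have hside := (h.isBidirection_splice ht).indicator fun d => h.splice_opp_mem_side ht
  have hsideNet : Γ.net ((Γ.side t X).indicator t') = 3 * Γ.net ((Γ.side t X).indicator t) := by
    ext v
    rw [← ht'.side_eq, net_indicator_side, ht'.side_eq, hnet, Pi.mul_apply, Pi.mul_apply,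
      net_indicator_side, mul_ite, mul_zero]
  have hdvd : 4 ∣ ∑ d, (Γ.side t X).indicator t' d - ∑ d, (Γ.side t X).indicator t d := by
    have := Finset.dvd_sum fun v (_ : v ∈ univ) => hsideEven X v
    rw [← Γ.sum_net, ← Γ.sum_net, hsideNet]
    simp only [Pi.mul_apply, Pi.ofNat_apply, ← Finset.mul_sum]
    omega
  obtain ⟨v, τ, hτ, hτnet⟩ := ih _ (hn ▸ h.card_support_side_lt ht) hside
    (h.isConnected_splice ht hconn) (hsideEven X) (by rwa [sum_indicator_side])
    (h.reorients_splice ht ht' (h.reorients_alike ht ht' hdvd)) hsideNet rfl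
  obtain ⟨σ, hσ, hσ0⟩ := exists_reorients_net_eq_zero
    (((h.compl ht).isBidirection_splice ht).indicator fun d => (h.compl ht).splice_opp_mem_side ht)
    ((h.compl ht).isConnected_splice ht hconn) (hsideEven Xᶜ) (by rwa [sum_indicator_side])
  obtain ⟨τ', hτ', hτ'net⟩ := h.exists_reorients_net_eq_add ht hτ hσ hσ0
  exact ⟨v, τ', hτ', hτ'net.trans hτnet⟩

end TwoCuts

end DartGraph

namespace SignedGraph

section HalfEdges

open DartGraph

variable {V E : Type} {G : SignedGraph V E} {S : Finset E} {f g τ : E × Bool → ℤ} {v : V}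

/-- The graph underlying `G`, with the half-edges as darts. -/
def toDartGraph (G : SignedGraph V E) : DartGraph (E × Bool) V where
  opp p := (p.1, !p.2)
  vert p := G.ends p.1 p.2
  opp_opp p := by simp
  opp_ne p h := by simpa using congr_arg Prod.snd h

/-- The half-edges of the edges in `S`. -/
def darts (S : Finset E) : Set (E × Bool) :=
  {p | p.1 ∈ S}

/-- The two half-edges of an edge carry opposite values if the edge is positive and equal values
if it is negative. Such `f` are the edge weightings of `G`, each written as the inflow that it
contributes at the two ends of every edge; they do not refer to an orientation. -/
def IsCompatible (G : SignedGraph V E) (f : E × Bool → ℤ) : Prop :=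
  ∀ e, f (e, true) = -(G.sign e) * f (e, false)

theorem opp_mem_darts (G : SignedGraph V E) {p : E × Bool} (hp : p ∈ darts S) :
    G.toDartGraph.opp p ∈ darts S :=
  hp

theorem mem_darts {p : E × Bool} : p ∈ darts S ↔ p.1 ∈ S :=
  Iff.rfl

theorem exists_darts_eq [Finite E] {K : Set (E × Bool)}
    (hK : ∀ p ∈ K, G.toDartGraph.opp p ∈ K) : ∃ S : Finset E, darts S = K := by
  refine ⟨(Set.toFinite {e | (e, false) ∈ K}).toFinset, ?_⟩
  ext ⟨e, i⟩
  rw [mem_darts, Set.Finite.mem_toFinset]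
  cases i
  · rfl
  · exact ⟨hK _, hK _⟩

theorem darts_univ [Fintype E] : darts (univ : Finset E) = Set.univ :=
  Set.eq_univ_of_forall fun p => mem_univ p.1

theorem IsCompatible.add (hf : G.IsCompatible f) (hg : G.IsCompatible g) :
    G.IsCompatible (f + g) := fun e => by
  simp only [Pi.add_apply, hf e, hg e, mul_add]

theorem IsCompatible.neg (hf : G.IsCompatible f) : G.IsCompatible (-f) := fun e => by
  simp only [Pi.neg_apply, hf e, mul_neg]

theorem IsCompatible.indicator (hf : G.IsCompatible f) (S : Finset E) :
    G.IsCompatible ((darts S).indicator f) := fun e => by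
  by_cases he : e ∈ S <;> simp [darts, he, hf e]

theorem IsCompatible.sign (hf : G.IsCompatible f) :
    G.IsCompatible fun p => (f p).sign := fun e => by
  rcases Int.units_eq_one_or (G.sign e) with h | h <;> simp [hf e, h]

theorem IsCompatible.reorients (hf : G.IsCompatible f) (h : G.toDartGraph.Reorients f g) :
    G.IsCompatible g := fun e => by
  rcases h (e, false) with ⟨h₁, h₂⟩ | ⟨h₁, h₂⟩ <;>
    simp only [toDartGraph, Bool.not_false] at h₂ <;> simp [h₁, h₂, hf e]

theorem IsCompatible.abs_opp (hf : G.IsCompatible f) (p : E × Bool) :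
    |f (G.toDartGraph.opp p)| = |f p| := by
  have habs (e : E) : |f (e, true)| = |f (e, false)| := by
    rcases Int.units_eq_one_or (G.sign e) with h | h <;> simp [hf e, h]
  rcases p with ⟨e, _ | _⟩
  exacts [habs e, (habs e).symm]

theorem IsCompatible.isBidirection (hf : G.IsCompatible f) (hle : ∀ p, |f p| ≤ 1) :
    G.toDartGraph.IsBidirection f :=
  fun p => ⟨hle p, hf.abs_opp p⟩

theorem IsCompatible.four_dvd_add_sub (hτ : G.IsCompatible τ) (hone : ∀ p, |τ p| = 1) (e : E) :
    4 ∣ τ (e, false) + τ (e, true) - 2 * if G.sign e = -1 then 1 else 0 := by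
  have := eq_or_eq_neg_of_abs_eq (hone (e, false))
  rcases Int.units_eq_one_or (G.sign e) with h | h
  · have hne : (1 : ℤˣ) ≠ -1 := by decide
    simp [hτ e, h, hne]
  · simp only [hτ e, h, if_true, Units.val_neg, Units.val_one, neg_neg, one_mul]
    omega

section Parity

theorem indicator_darts_apply [DecidableEq E] (S : Finset E) (f : E × Bool → ℤ) (p : E × Bool) :
    (darts S).indicator f p = if p.1 ∈ S then f p else 0 := by
  by_cases hp : p.1 ∈ S <;> simp [darts, hp]

variable [Fintype E]

theorem sum_indicator_darts (S : Finset E) (f : E × Bool → ℤ) :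
    ∑ p, (darts S).indicator f p = ∑ e ∈ S, (f (e, false) + f (e, true)) := by
  classical
  simp only [Fintype.sum_prod_type, Fintype.sum_bool, indicator_darts_apply,
    Finset.sum_add_distrib, Finset.sum_ite_mem, Finset.univ_inter]
  exact add_comm _ _

theorem odd_card_negEdges_iff (hτ : G.IsCompatible τ) (hone : ∀ p, |τ p| = 1) :
    Odd #(G.negEdges S) ↔ ¬ 4 ∣ ∑ p, (darts S).indicator τ p := by
  have hdvd : 4 ∣ ∑ p, (darts S).indicator τ p - 2 * (#(G.negEdges S) : ℤ) := by
    rw [sum_indicator_darts, negEdges, Finset.card_filter, Nat.cast_sum, Finset.mul_sum,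
      ← Finset.sum_sub_distrib]
    exact Finset.dvd_sum fun e _ => by simpa using hτ.four_dvd_add_sub hone e
  rw [Nat.odd_iff]
  omega

variable [DecidableEq V] [DecidableEq E]

theorem natCast_valencyOn (G : SignedGraph V E) (S : Finset E) (v : V) :
    (G.valencyOn S v : ℤ) = G.toDartGraph.net ((darts S).indicator 1) v := by
  simp only [net, indicator_darts_apply, Pi.one_apply, ← Finset.sum_filter,
    Finset.sum_const, nsmul_one]
  rw [valencyOn, Finset.filter_filter]
  simp only [toDartGraph, and_comm]

theorem two_dvd_net_indicator_iff (hone : ∀ p, |τ p| = 1) :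
    2 ∣ G.toDartGraph.net ((darts S).indicator τ) v ↔ Even (G.valencyOn S v) := by
  have hdvd : 2 ∣ G.toDartGraph.net ((darts S).indicator τ) v - G.valencyOn S v := by
    rw [natCast_valencyOn, ← Pi.sub_apply, ← net_sub, ← Set.indicator_sub']
    refine Finset.dvd_sum fun p _ => ?_
    have := eq_or_eq_neg_of_abs_eq (hone p)
    rw [indicator_darts_apply, Pi.sub_apply, Pi.one_apply]
    split_ifs <;> omega
  rw [Nat.even_iff]
  omega

end Parity

section Connectivity

variable [Fintype V] [DecidableEq V]

theorem mem_suppV : v ∈ G.suppV S ↔ ∃ p ∈ darts S, G.toDartGraph.vert p = v := by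
  simp [suppV, darts, toDartGraph, Prod.exists]

variable [Fintype E]

theorem connOn_iff_isConnected (hone : ∀ p, |τ p| = 1) :
    G.ConnOn S ↔ G.toDartGraph.IsConnected ((darts S).indicator τ) := by
  have hsupp : darts S ⊆ Function.support τ := fun p _ hp => by simpa [hp] using hone p
  rw [isConnected_indicator_iff (fun _ => G.opp_mem_darts) hsupp]
  constructor
  · intro hconn X hX p hp q hq hpX
    have hreach := hconn _ (mem_suppV.2 ⟨p, hp, rfl⟩) _ (mem_suppV.2 ⟨q, hq, rfl⟩)
    generalize G.toDartGraph.vert q = w at hreach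
    induction hreach with
    | refl => exact hpX
    | tail _ hstep ih =>
      obtain ⟨e, he, i, rfl, rfl⟩ := hstep
      exact (hX (e, i) he).1 ih
  · classical
    intro hclosed u hu v hv
    obtain ⟨p, hp, rfl⟩ := mem_suppV.1 hu
    obtain ⟨q, hq, rfl⟩ := mem_suppV.1 hv
    have hstep (r : E × Bool) (hr : r ∈ darts S) :
        G.AdjOn S (G.toDartGraph.vert r) (G.toDartGraph.vert (G.toDartGraph.opp r)) :=
      ⟨r.1, hr, r.2, rfl, rfl⟩
    have hreach := hclosed {w | Relation.ReflTransGen (G.AdjOn S) (G.toDartGraph.vert p) w}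
      (fun r hr => by
        simp only [mem_filter_univ]
        refine ⟨fun h => h.tail (hstep r hr), fun h => h.tail ?_⟩
        simpa only [G.toDartGraph.opp_opp] using hstep _ (G.opp_mem_darts hr)) p hp q hq
    simpa only [mem_filter_univ] using hreach (mem_filter_univ _ |>.2 .refl)

end Connectivity

section Flow

theorem exists_isCompatible (G : SignedGraph V E) :
    ∃ τ, G.IsCompatible τ ∧ ∀ p, |τ p| = 1 := by
  refine ⟨fun p => bif p.2 then -(G.sign p.1) else 1, fun e => by simp, fun p => ?_⟩
  rcases p with ⟨e, _ | _⟩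
  · simp
  · rcases Int.units_eq_one_or (G.sign e) with h | h <;> simp [h]

theorem Orientation.isCompatible (O : G.Orientation) (φ : E → ℤ) :
    G.IsCompatible fun p => if O.dir p.1 p.2 then φ p.1 else -φ p.1 := fun e => by
  have hcompat := O.compat e
  rcases Int.units_eq_one_or (G.sign e) with h | h
  · cases hf : O.dir e false <;> cases ht : O.dir e true <;> simp_all
  · have hne : (-1 : ℤˣ) ≠ 1 := by decide
    cases hf : O.dir e false <;> cases ht : O.dir e true <;> simp_all

theorem exists_orientation (G : SignedGraph V E) : ∃ O : G.Orientation, ∀ f, G.IsCompatible f →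
    (fun p => if O.dir p.1 p.2 then f (p.1, false) else -f (p.1, false)) = f := by
  have hne : (-1 : ℤˣ) ≠ 1 := by decide
  have hne' : (1 : ℤˣ) ≠ -1 := by decide
  refine ⟨⟨fun e i => i = false ∨ G.sign e = -1, fun e => ?_⟩, fun f hf => ?_⟩
  · rcases Int.units_eq_one_or (G.sign e) with h | h <;> simp [h, hne, hne']
  · ext ⟨e, _ | _⟩
    · simp
    · rcases Int.units_eq_one_or (G.sign e) with h | h <;> simp [hf e, h, hne']

variable [Fintype E] [DecidableEq V]

theorem hasNZkFlow_iff {k : ℕ} : G.HasNZkFlow k ↔ ∃ f, G.IsCompatible f ∧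
    G.toDartGraph.net f = 0 ∧ ∀ p, f p ≠ 0 ∧ |f p| < k := by
  constructor
  · rintro ⟨O, φ, hflow, hφ⟩
    refine ⟨_, O.isCompatible φ, funext hflow, fun p => ?_⟩
    split_ifs
    · exact hφ p.1
    · simpa using hφ p.1
  · rintro ⟨f, hf, hnet, hne⟩
    obtain ⟨O, hO⟩ := G.exists_orientation
    refine ⟨O, fun e => f (e, false), fun v => ?_, fun e => hne _⟩
    have := congr_fun hnet v
    rwa [← hO f hf] at this

theorem three_le_of_hasNZkFlow [Finite V] {k : ℕ}
    (hodd : Odd #(G.negEdges univ)) (hk : G.HasNZkFlow k) : 3 ≤ k := by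
  have := Fintype.ofFinite V
  obtain ⟨f, hf, hnet, hne⟩ := hasNZkFlow_iff.1 hk
  by_contra hlt
  have hone (p : E × Bool) : |f p| = 1 := by
    have hpos := abs_pos.2 (hne p).1
    have hltk := (hne p).2
    omega
  rw [odd_card_negEdges_iff hf hone, darts_univ, Set.indicator_univ, ← G.toDartGraph.sum_net,
    hnet] at hodd
  simp at hodd

end Flow

section Eulerian

variable [Fintype E] [DecidableEq V] [DecidableEq E]

theorem Eulerian.two_dvd_net (hG : G.Eulerian) (hone : ∀ p, |τ p| = 1) (v : V) :
    2 ∣ G.toDartGraph.net τ v := by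
  simpa only [darts_univ, Set.indicator_univ] using (two_dvd_net_indicator_iff hone).2 (hG.2 v)

theorem Eulerian.isConnected [Finite V] (hG : G.Eulerian) (hone : ∀ p, |τ p| = 1) :
    G.toDartGraph.IsConnected τ := by
  have := Fintype.ofFinite V
  have hconn : G.ConnOn univ := fun u _ v _ => hG.1.2 u v
  simpa only [darts_univ, Set.indicator_univ] using (connOn_iff_isConnected hone).1 hconn

theorem Eulerian.hasNZkFlow_two [Finite V] (hG : G.Eulerian) (hτ : G.IsCompatible τ)
    (hone : ∀ p, |τ p| = 1) (hsum : 4 ∣ ∑ p, τ p) : G.HasNZkFlow 2 := by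
  obtain ⟨f, hf, hnet⟩ := exists_reorients_net_eq_zero
    (hτ.isBidirection fun p => (hone p).le) (hG.isConnected hone) (hG.two_dvd_net hone) hsum
  refine hasNZkFlow_iff.2 ⟨f, hτ.reorients hf, hnet, fun p => ?_⟩
  rw [← abs_pos, hf.abs_eq, hone]
  simp

variable [Fintype V]

theorem EulerianOn.exists_isCompatible_net_eq_single (hS : G.EulerianOn S)
    (hodd : Odd #(G.negEdges S)) (hv : v ∈ G.suppV S) :
    ∃ f, G.IsCompatible f ∧ G.toDartGraph.net f = Pi.single v 2 ∧
      ∀ p, |f p| = if p.1 ∈ S then 1 else 0 := by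
  obtain ⟨τ, hτ, hone⟩ := G.exists_isCompatible
  obtain ⟨p, hp, hpv⟩ := mem_suppV.1 hv
  have hτS := hτ.indicator S
  have habs (q : E × Bool) : |(darts S).indicator τ q| = if q.1 ∈ S then 1 else 0 := by
    rw [indicator_darts_apply]
    split_ifs <;> simp [hone]
  obtain ⟨f, hf, hnet⟩ := exists_reorients_net_eq_single
    (hτS.isBidirection fun q => by rw [habs]; split_ifs <;> simp)
    ((connOn_iff_isConnected hone).1 hS.2.1)
    (fun w => (two_dvd_net_indicator_iff hone).2 (hS.2.2 w))
    ⟨p, by rw [← abs_ne_zero, habs, if_pos (mem_darts.1 hp)]; exact one_ne_zero, hpv⟩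
    ((odd_card_negEdges_iff hτ hone).1 hodd)
  exact ⟨f, hτS.reorients hf, hnet, fun q => by rw [hf.abs_eq, habs]⟩

theorem TriplyOdd.hasNZkFlow_three (hG : G.TriplyOdd) : G.HasNZkFlow 3 := by
  obtain ⟨S₁, S₂, S₃, h₁₂, h₁₃, h₂₃, hunion, hS₁, hS₂, hS₃, ho₁, ho₂, ho₃, v, hv₁, hv₂, hv₃⟩ := hG
  obtain ⟨f₁, hf₁, hnet₁, habs₁⟩ := hS₁.exists_isCompatible_net_eq_single ho₁ hv₁
  obtain ⟨f₂, hf₂, hnet₂, habs₂⟩ := hS₂.exists_isCompatible_net_eq_single ho₂ hv₂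
  obtain ⟨f₃, hf₃, hnet₃, habs₃⟩ := hS₃.exists_isCompatible_net_eq_single ho₃ hv₃
  refine hasNZkFlow_iff.2 ⟨f₁ + f₂ + -(f₃ + f₃), (hf₁.add hf₂).add (hf₃.add hf₃).neg, ?_,
    fun p => ?_⟩
  · simp only [net_add, net_neg, hnet₁, hnet₂, hnet₃, add_neg_cancel]
  · have hp : p.1 ∈ S₁ ∪ S₂ ∪ S₃ := hunion ▸ mem_univ _
    rw [Finset.disjoint_left] at h₁₂ h₁₃ h₂₃
    have h₁ := habs₁ p
    have h₂ := habs₂ p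
    have h₃ := habs₃ p
    simp only [Pi.add_apply, Pi.neg_apply, Nat.cast_ofNat]
    grind

theorem TriplyOdd.odd_card_negEdges (hG : G.TriplyOdd) : Odd #(G.negEdges univ) := by
  obtain ⟨S₁, S₂, S₃, h₁₂, h₁₃, h₂₃, hunion, -, -, -, ho₁, ho₂, ho₃, -⟩ := hG
  have hdisj : Disjoint (S₁ ∪ S₂) S₃ := Finset.disjoint_union_left.2 ⟨h₁₃, h₂₃⟩
  rw [negEdges, ← hunion, Finset.filter_union, Finset.filter_union,
    Finset.card_union_of_disjoint
      (by simpa only [Finset.filter_union] using Finset.disjoint_filter_filter hdisj),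
    Finset.card_union_of_disjoint (Finset.disjoint_filter_filter h₁₂)]
  exact (ho₁.add_odd ho₂).add_odd ho₃

theorem eulerianOn_of_isPiece (hτ : G.IsCompatible τ) (hone : ∀ p, |τ p| = 1)
    (hpiece : G.toDartGraph.IsPiece τ v (darts S)) :
    G.EulerianOn S ∧ Odd #(G.negEdges S) ∧ v ∈ G.suppV S := by
  refine ⟨⟨?_, (connOn_iff_isConnected hone).2 hpiece.isConnected, fun w => ?_⟩, ?_, ?_⟩
  · obtain ⟨p, hp⟩ := hpiece.nonempty
    exact ⟨p.1, hp⟩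
  · rw [← two_dvd_net_indicator_iff hone, hpiece.net_eq, Pi.single_apply]
    split_ifs <;> simp
  · rw [odd_card_negEdges_iff hτ hone, ← G.toDartGraph.sum_net, hpiece.net_eq]
    simp
  · by_contra hv
    have hzero : G.toDartGraph.net ((darts S).indicator τ) v = 0 :=
      net_eq_zero fun p hp => Set.indicator_of_notMem (fun h => hv (mem_suppV.2 ⟨p, h, hp⟩)) _
    simp [hpiece.net_eq] at hzero

theorem triplyOdd_of_net_eq_single_six (hτ : G.IsCompatible τ) (hone : ∀ p, |τ p| = 1)
    (hconn : G.toDartGraph.IsConnected τ) (hnet : G.toDartGraph.net τ = Pi.single v 6) :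
    G.TriplyOdd := by
  obtain ⟨K, hK, hdisj, hunion⟩ := exists_isPiece_iUnion_eq_support
    (hτ.isBidirection fun p => (hone p).le) hconn (n := 3) (by simp) (by simpa using hnet)
  choose S hS using fun i => exists_darts_eq (hK i).opp_mem
  have heuler (i : Fin 3) := eulerianOn_of_isPiece hτ hone (hS i ▸ hK i)
  have hSdisj {i j : Fin 3} (hij : i ≠ j) : Disjoint (S i) (S j) :=
    Finset.disjoint_left.2 fun e hi hj => Set.disjoint_left.1 (hdisj hij)
      (hS i ▸ hi : (e, false) ∈ K i) (hS j ▸ hj : (e, false) ∈ K j)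
  refine ⟨S 0, S 1, S 2, hSdisj (by decide), hSdisj (by decide), hSdisj (by decide), ?_,
    (heuler 0).1, (heuler 1).1, (heuler 2).1, (heuler 0).2.1, (heuler 1).2.1, (heuler 2).2.1,
    v, (heuler 0).2.2, (heuler 1).2.2, (heuler 2).2.2⟩
  refine Finset.eq_univ_of_forall fun e => ?_
  have he : (e, false) ∈ ⋃ i, K i := by
    rw [hunion, Function.mem_support, ← abs_ne_zero, hone]
    exact one_ne_zero
  obtain ⟨i, hi⟩ := Set.mem_iUnion.1 he
  rw [← hS i, mem_darts] at hi
  fin_cases i <;> simp_all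

theorem Eulerian.triplyOdd (hG : G.Eulerian) (h₃ : G.HasNZkFlow 3) (h₂ : ¬ G.HasNZkFlow 2) :
    G.TriplyOdd := by
  obtain ⟨f, hf, hnet, hne⟩ := hasNZkFlow_iff.1 h₃
  let t (p : E × Bool) : ℤ := (f p).sign
  have ht : G.IsCompatible t := hf.sign
  have hone (p : E × Bool) : |t p| = 1 := by
    rw [Int.abs_sign_of_ne_zero (hne p).1]
  -- `3t - 2f` is `t` where `|f| = 1` and `-t` where `|f| = 2`.
  have hreor : G.toDartGraph.Reorients t (3 * t - 2 * f) := by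
    intro p
    have hopp := hf.abs_opp p
    have hlt := hne p
    have hlt' := hne (G.toDartGraph.opp p)
    simp only [t, Pi.sub_apply, Pi.mul_apply, Pi.ofNat_apply]
    grind
  have hnet' : G.toDartGraph.net (3 * t - 2 * f) = 3 * G.toDartGraph.net t := by
    rw [net_sub, net_ofNat_mul, net_ofNat_mul, hnet, mul_zero, sub_zero]
  obtain ⟨v, τ, hτ, hsix⟩ := exists_reorients_net_eq_single_six
    (ht.isBidirection fun p => (hone p).le) (hG.isConnected hone) (hG.two_dvd_net hone)
    (fun hsum => h₂ (hG.hasNZkFlow_two ht hone hsum)) hreor hnet'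
  have hτone (p : E × Bool) : |τ p| = 1 := by rw [hτ.abs_eq, hone]
  exact triplyOdd_of_net_eq_single_six (ht.reorients hτ) hτone (hG.isConnected hτone) hsix

end Eulerian

end HalfEdges

end SignedGraph

open SignedGraph Finset in
/-- For a connected signed eulerian graph `G`, the flow number
`Φ(G)` equals `3` (i.e. `3` is the least `k` such that `G` has a nowhere-zero
`k`-flow) if and only if `G` is triply odd. -/
theorem stmt2 {V E : Type} [Fintype V] [Fintype E] [DecidableEq V]
    [DecidableEq E] (G : SignedGraph V E) (hG : G.Eulerian) :
    IsLeast {k : ℕ | G.HasNZkFlow k} 3 ↔ G.TriplyOdd := by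
  constructor
  · rintro ⟨hthree, hleast⟩
    exact hG.triplyOdd hthree fun htwo => absurd (hleast htwo) (by decide)
  · intro hodd
    exact ⟨hodd.hasNZkFlow_three, fun _ => three_le_of_hasNZkFlow hodd.odd_card_negEdges⟩
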